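/- arXiv:1701.02709 — 2 statements merged into one kernel-verified Lean document; each statement's English description precedes it below -/
import Mathlib

section
/- Let L be a positive definite moment functional on real polynomials in d variables, let {ℙ_n} be vectors of polynomials forming degree-wise bases of the spaces of orthogonal polynomials with respect to L, and let A_{n,i}, B_{n,i}, C_{n,i} be the coefficient matrices of the three-term relation x_i ℙ_n = A_{n,i} ℙ_{n+1} + B_{n,i} ℙ_n + C_{n,i} ℙ_{n−1}. Then for every n ∈ ℕ and 1 ≤ i ≤ d: rank A_{n,i} = r_n^d and rank C_{n+1,i} = r_n^d; moreover, the stacked matrix A_n = (A_{n,1}ᵀ, …, A_{n,d}ᵀ)ᵀ of size d·r_n^d × r_{n+1}^d has rank r_{n+1}^d, and the stacked matrix C_{n+1}ᵀ = (C_{n+1,1}, …, C_{n+1,d})ᵀ of size d·r_n^d × r_{n+1}^d has rank r_{n+1}^d. -/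
open MvPolynomial Matrix MeasureTheory

noncomputable section

/-- Real polynomials in `d` variables. -/
abbrev MPoly (d : ℕ) : Type := MvPolynomial (Fin d) ℝ

/-- Multi-indices `α ∈ ℕ^d` of total degree `n`; there are `r_n^d = binom (n+d-1) n` of them. -/
abbrev Idx (d n : ℕ) : Type := {α : Fin d → ℕ // ∑ i, α i = n}

instance (d n : ℕ) : Fintype (Idx d n) :=
  Fintype.subtype (Finset.Nat.antidiagonalTuple d n)
    (fun _ => Finset.Nat.mem_antidiagonalTuple)

/-- The monomial `x^α`. -/
def mono {d : ℕ} (α : Fin d → ℕ) : MPoly d :=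
  MvPolynomial.monomial (Finsupp.equivFunOnFinite.symm α) 1

/-- Multi-indices `α ∈ ℕ^d` of total degree at most `n`. -/
abbrev IdxLe (d n : ℕ) : Type := {α : Fin d → ℕ // ∑ i, α i ≤ n}

instance (d n : ℕ) : Fintype (IdxLe d n) :=
  Fintype.subtype ((Finset.range (n+1)).biUnion fun k => Finset.Nat.antidiagonalTuple d k)
    (fun α => by
      simp only [Finset.mem_biUnion, Finset.mem_range, Finset.Nat.mem_antidiagonalTuple,
        Nat.lt_succ_iff]
      exact ⟨fun ⟨k, hk, he⟩ => he ▸ hk, fun h => ⟨_, h, rfl⟩⟩)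

/-- `P` is a polynomial of total degree strictly less than `n` (the zero polynomial belongs
to every such class). -/
def IsDegLt {d : ℕ} (P : MPoly d) (n : ℕ) : Prop := P = 0 ∨ P.totalDegree < n

/-- The family `{P m α : |α| = m ≤ n}` spans `Π_n^d`, the polynomials of total degree at
most `n`, for every `n`. -/
def SpansPi {d : ℕ} (P : ∀ n, Idx d n → MPoly d) : Prop :=
  ∀ n, Submodule.span ℝ {p | ∃ m, m ≤ n ∧ ∃ α : Idx d m, p = P m α} =
    MvPolynomial.restrictTotalDegree (Fin d) ℝ n

variable {d : ℕ}

lemma homogeneousComponent_succ_X_mul {σ R : Type*} [CommSemiring R] (n : ℕ) (i : σ)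
    (p : MvPolynomial σ R) :
    homogeneousComponent (n + 1) (X i * p) = X i * homogeneousComponent n p := by
  classical
  ext m
  rw [coeff_homogeneousComponent, coeff_X_mul', coeff_X_mul', coeff_homogeneousComponent]
  by_cases hi : i ∈ m.support
  · have hm : m.degree = (m - Finsupp.single i 1).degree + 1 := by
      have h : m - Finsupp.single i 1 + Finsupp.single i 1 = m :=
        tsub_add_cancel_of_le (Finsupp.single_le_iff.mpr
          (Nat.one_le_iff_ne_zero.mpr (Finsupp.mem_support_iff.mp hi)))
      conv_lhs => rw [← h]
      simp
    simp [hi, hm]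
  · simp [hi]

lemma rank_eq_card_of_mulVec_eq_zero {m k : Type*} [Fintype m] [Fintype k] (M : Matrix m k ℝ)
    (h : ∀ v, M *ᵥ v = 0 → v = 0) : M.rank = Fintype.card k := by
  rw [Matrix.rank, LinearMap.finrank_range_of_inj, Module.finrank_fintype_fun_eq_card]
  exact (injective_iff_map_eq_zero M.mulVecLin).mpr h

lemma mono_isHomogeneous {n : ℕ} (α : Idx d n) : (mono α.1).IsHomogeneous n :=
  isHomogeneous_monomial _ (by rw [Finsupp.degree_eq_sum]; exact α.2)

lemma linearIndependent_mono (n : ℕ) : LinearIndependent ℝ fun α : Idx d n => mono α.1 := by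
  have h := (basisMonomials (Fin d) ℝ).linearIndependent.comp
    (fun α : Idx d n => Finsupp.equivFunOnFinite.symm α.1)
    (Finsupp.equivFunOnFinite.symm.injective.comp Subtype.val_injective)
  rw [coe_basisMonomials] at h
  exact h

/-- The degree-`n` homogeneous parts of the `P n α` span all forms of degree `n`. -/
lemma mem_span_leadingForm {P : ∀ n, Idx d n → MPoly d}
    (hdeg : ∀ n (α : Idx d n), (P n α).totalDegree = n) (hspan : SpansPi P)
    {n : ℕ} {p : MPoly d} (hp : p.IsHomogeneous n) :
    p ∈ Submodule.span ℝ (Set.range fun α => homogeneousComponent n (P n α)) := by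
  have hmem : p ∈ Submodule.span ℝ {p | ∃ m, m ≤ n ∧ ∃ α : Idx d m, p = P m α} := by
    rw [hspan n, mem_restrictTotalDegree]
    exact hp.totalDegree_le
  have hle : Submodule.span ℝ {p | ∃ m, m ≤ n ∧ ∃ α : Idx d m, p = P m α} ≤
      (Submodule.span ℝ (Set.range fun α => homogeneousComponent n (P n α))).comap
        (homogeneousComponent n) := by
    rw [Submodule.span_le]
    rintro _ ⟨m, hm, α, rfl⟩
    rw [SetLike.mem_coe, Submodule.mem_comap]
    rcases hm.lt_or_eq with hlt | rfl
    · rw [homogeneousComponent_eq_zero _ _ (by rwa [hdeg])]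
      exact zero_mem _
    · exact Submodule.subset_span ⟨α, rfl⟩
  have := hle hmem
  rwa [Submodule.mem_comap, homogeneousComponent_of_mem hp, if_pos rfl] at this

lemma linearIndependent_leadingForm {P : ∀ n, Idx d n → MPoly d}
    (hdeg : ∀ n (α : Idx d n), (P n α).totalDegree = n) (hspan : SpansPi P) (n : ℕ) :
    LinearIndependent ℝ fun α => homogeneousComponent n (P n α) := by
  rw [linearIndependent_iff_card_le_finrank_span]
  have hcard := finrank_span_eq_card (linearIndependent_mono (d := d) n)
  rw [← hcard]
  have : FiniteDimensional ℝ
      (Submodule.span ℝ (Set.range fun α => homogeneousComponent n (P n α))) :=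
    FiniteDimensional.span_of_finite ℝ (Set.finite_range _)
  apply Submodule.finrank_mono
  rw [Submodule.span_le]
  rintro _ ⟨α, rfl⟩
  exact mem_span_leadingForm hdeg hspan (mono_isHomogeneous α)

/-- A linear map killing `x_i q` for all `i` and all forms `q` of degree `n` kills all forms of
degree `n + 1`. -/
lemma map_eq_zero_of_map_X_mul_eq_zero {n : ℕ} (f : MPoly d →ₗ[ℝ] ℝ)
    (hf : ∀ (i : Fin d) (q : MPoly d), q.IsHomogeneous n → f (X i * q) = 0)
    {p : MPoly d} (hp : p.IsHomogeneous (n + 1)) : f p = 0 := by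
  rw [p.as_sum, map_sum]
  refine Finset.sum_eq_zero fun m hm => ?_
  have hmdeg : m.degree = n + 1 := by
    rw [Finsupp.degree_eq_weight_one]
    exact hp (mem_support_iff.mp hm)
  obtain ⟨i, hi⟩ : ∃ i, m i ≠ 0 := by
    by_contra! h
    have : m = 0 := Finsupp.ext h
    simp [this] at hmdeg
  have hsplit : Finsupp.single i 1 + (m - Finsupp.single i 1) = m :=
    add_tsub_cancel_of_le (Finsupp.single_le_iff.mpr (Nat.one_le_iff_ne_zero.mpr hi))
  have hX : monomial m (coeff m p) = X i * monomial (m - Finsupp.single i 1) (coeff m p) := by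
    rw [X, monomial_mul, hsplit, one_mul]
  rw [hX]
  refine hf i _ (isHomogeneous_monomial _ ?_)
  have := congrArg Finsupp.degree hsplit
  rw [map_add, Finsupp.degree_single] at this
  omega

/-- The Gram matrix `H_n = L(ℙ_n ℙ_nᵀ)`. -/
def gramMatrix (L : MPoly d →ₗ[ℝ] ℝ) (P : ∀ n, Idx d n → MPoly d) (n : ℕ) :
    Matrix (Idx d n) (Idx d n) ℝ :=
  Matrix.of fun α β => L (P n α * P n β)

lemma isUnit_gramMatrix {L : MPoly d →ₗ[ℝ] ℝ} (hL : ∀ p : MPoly d, p ≠ 0 → 0 < L (p * p))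
    {P : ∀ n, Idx d n → MPoly d} {n : ℕ} (hP : LinearIndependent ℝ (P n)) :
    IsUnit (gramMatrix L P n) := by
  rw [← Matrix.mulVec_injective_iff_isUnit]
  refine (injective_iff_map_eq_zero (gramMatrix L P n).mulVecLin).mpr fun v hv => ?_
  rw [Matrix.mulVecLin_apply] at hv
  have hsq : L ((∑ α, v α • P n α) * ∑ α, v α • P n α) = v ⬝ᵥ gramMatrix L P n *ᵥ v := by
    rw [Finset.sum_mul_sum]
    simp only [dotProduct, mulVec, gramMatrix, Matrix.of_apply, map_sum, smul_mul_smul_comm,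
      map_smul, smul_eq_mul, Finset.mul_sum]
    exact Finset.sum_congr rfl fun _ _ => Finset.sum_congr rfl fun _ _ => by ring
  have hzero : ∑ α, v α • P n α = 0 := by
    by_contra hne
    have := hL _ hne
    rw [hsq, hv, dotProduct_zero] at this
    exact this.false
  exact funext (Fintype.linearIndependent_iff.mp hP v hzero)


/-- Rank conditions on the coefficient matrices of the three-term relation:
`rank A_{n,i} = rank C_{n+1,i} = r_n^d`, and the stacked matrices
`A_n = (A_{n,1}ᵀ,…,A_{n,d}ᵀ)ᵀ` and `C_{n+1}ᵀ = (C_{n+1,1},…,C_{n+1,d})ᵀ` have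
rank `r_{n+1}^d`.  Here `Cm n i` denotes the matrix `C_{n+1,i}`, and
`r_n^d = card (Idx d n) = binom (n+d-1) n`. -/
theorem three_term_relation_coefficients_full_rank
    (L : MPoly d →ₗ[ℝ] ℝ)
    (hL : ∀ p : MPoly d, p ≠ 0 → 0 < L (p * p))
    (P : ∀ n, Idx d n → MPoly d)
    (hdeg : ∀ n (α : Idx d n), (P n α).totalDegree = n)
    (hspan : SpansPi P)
    (horth : ∀ n (α : Idx d n) (R : MPoly d), IsDegLt R n → L (P n α * R) = 0)
    (A : ∀ n : ℕ, Fin d → Matrix (Idx d n) (Idx d (n+1)) ℝ)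
    (B : ∀ n : ℕ, Fin d → Matrix (Idx d n) (Idx d n) ℝ)
    (Cm : ∀ n : ℕ, Fin d → Matrix (Idx d (n+1)) (Idx d n) ℝ)
    (hrel0 : ∀ (i : Fin d) (α : Idx d 0), X i * P 0 α =
      (∑ β : Idx d 1, A 0 i α β • P 1 β) + ∑ β : Idx d 0, B 0 i α β • P 0 β)
    (hrel : ∀ (n : ℕ) (i : Fin d) (α : Idx d (n+1)), X i * P (n+1) α =
      (∑ β : Idx d (n+2), A (n+1) i α β • P (n+2) β) +
      (∑ β : Idx d (n+1), B (n+1) i α β • P (n+1) β) +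
      ∑ β : Idx d n, Cm n i α β • P n β) :
    (∀ (n : ℕ) (i : Fin d), (A n i).rank = Fintype.card (Idx d n)) ∧
    (∀ (n : ℕ) (i : Fin d), (Cm n i).rank = Fintype.card (Idx d n)) ∧
    (∀ n : ℕ,
      (Matrix.of fun (p : Fin d × Idx d n) (β : Idx d (n+1)) => A n p.1 p.2 β).rank =
        Fintype.card (Idx d (n+1))) ∧
    (∀ n : ℕ,
      (Matrix.of fun (p : Fin d × Idx d n) (β : Idx d (n+1)) => Cm n p.1 β p.2).rank =
        Fintype.card (Idx d (n+1))) := by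
  have hli := linearIndependent_leadingForm hdeg hspan
  have hindep : ∀ n, LinearIndependent ℝ (P n) := fun n =>
    LinearIndependent.of_comp (homogeneousComponent n) (hli n)
  have hlow : ∀ {m k : ℕ} (α : Idx d m), m < k → homogeneousComponent k (P m α) = 0 :=
    fun α hmk => homogeneousComponent_eq_zero _ _ (by rwa [hdeg])
  have horth' : ∀ {m k : ℕ} (α : Idx d m) (β : Idx d k), k < m → L (P m α * P k β) = 0 :=
    fun α β hkm => horth _ α _ (Or.inr (by rwa [hdeg]))
  have horth'' : ∀ {m k : ℕ} (α : Idx d m) (β : Idx d k), m < k → L (P m α * P k β) = 0 :=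
    fun α β hmk => by rw [mul_comm]; exact horth' β α hmk
  -- Comparing leading forms in the three-term relation.
  have hA : ∀ n i (α : Idx d n), X i * homogeneousComponent n (P n α) =
      ∑ β, A n i α β • homogeneousComponent (n + 1) (P (n + 1) β) := by
    intro n i α
    rw [← homogeneousComponent_succ_X_mul]
    cases n with
    | zero => simp [hrel0, hlow]
    | succ n => simp [hrel, hlow]
  -- `L(x_i P_n γ P_{n+1} α)`, computed through the relation for `P_n`.
  have hLA : ∀ n i (γ : Idx d n) (α : Idx d (n + 1)), L (X i * P n γ * P (n + 1) α) =
      ∑ δ, A n i γ δ * L (P (n + 1) δ * P (n + 1) α) := by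
    intro n i γ α
    cases n with
    | zero => simp [hrel0, horth'', add_mul, Finset.sum_mul]
    | succ n => simp [hrel, horth'', add_mul, Finset.sum_mul]
  have hLC : ∀ n i (α : Idx d (n + 1)) (γ : Idx d n), L (X i * P (n + 1) α * P n γ) =
      ∑ β, Cm n i α β * L (P n β * P n γ) := by
    intro n i α γ
    simp [hrel, horth', add_mul, Finset.sum_mul]
  have hCH : ∀ n i, Cm n i * gramMatrix L P n = gramMatrix L P (n + 1) * (A n i)ᵀ := by
    intro n i
    ext α γ
    simp only [Matrix.mul_apply, gramMatrix, Matrix.of_apply, Matrix.transpose_apply]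
    rw [← hLC, mul_right_comm, hLA]
    exact Finset.sum_congr rfl fun δ _ => by rw [mul_comm (P (n + 1) α), mul_comm]
  have hH : ∀ n, IsUnit (gramMatrix L P n).det := fun n =>
    (Matrix.isUnit_iff_isUnit_det _).mp (isUnit_gramMatrix hL (hindep n))
  have hrankA : ∀ n i, (A n i).rank = Fintype.card (Idx d n) := by
    intro n i
    rw [← Matrix.rank_transpose]
    refine rank_eq_card_of_mulVec_eq_zero _ fun v hv => ?_
    have hzero : X i * ∑ α, v α • homogeneousComponent n (P n α) = 0 := by
      simp only [Finset.mul_sum, mul_smul_comm, hA, Finset.smul_sum, smul_smul]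
      rw [Finset.sum_comm]
      simp only [← Finset.sum_smul]
      refine Finset.sum_eq_zero fun β _ => ?_
      have hβ := congrFun hv β
      simp only [mulVec, dotProduct, transpose_apply, Pi.zero_apply] at hβ
      simp only [mul_comm (v _), hβ, zero_smul]
    exact funext (Fintype.linearIndependent_iff.mp (hli n) v
      ((mul_eq_zero.mp hzero).resolve_left (X_ne_zero i)))
  have hstack : ∀ n (v : Idx d (n + 1) → ℝ), (∀ i, A n i *ᵥ v = 0) → v = 0 := by
    intro n v hv
    obtain ⟨f, hf⟩ : ∃ f : MPoly d →ₗ[ℝ] ℝ,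
        ∀ β, f (homogeneousComponent (n + 1) (P (n + 1) β)) = v β := by
      obtain ⟨f, hf⟩ := LinearMap.exists_extend ((Module.Basis.span (hli (n + 1))).constr ℝ v)
      refine ⟨f, fun β => ?_⟩
      have := LinearMap.congr_fun hf (Module.Basis.span (hli (n + 1)) β)
      rwa [Module.Basis.constr_basis, LinearMap.comp_apply, Submodule.subtype_apply,
        Module.Basis.span_apply] at this
    have hfX : ∀ i (q : MPoly d), q.IsHomogeneous n → f (X i * q) = 0 := by
      intro i q hq
      have hle : Submodule.span ℝ (Set.range fun α => homogeneousComponent n (P n α)) ≤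
          LinearMap.ker (f ∘ₗ LinearMap.mulLeft ℝ (X i)) := by
        rw [Submodule.span_le]
        rintro _ ⟨α, rfl⟩
        have hα := congrFun (hv i) α
        simp only [mulVec, dotProduct, Pi.zero_apply] at hα
        simp [hA, hf, hα]
      exact hle (mem_span_leadingForm hdeg hspan hq)
    funext β
    rw [← hf β]
    exact map_eq_zero_of_map_X_mul_eq_zero f hfX (homogeneousComponent_isHomogeneous _ _)
  refine ⟨hrankA, fun n i => ?_, fun n => ?_, fun n => ?_⟩
  · rw [← Matrix.rank_mul_eq_left_of_isUnit_det _ (Cm n i) (hH n), hCH,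
      Matrix.rank_mul_eq_right_of_isUnit_det _ _ (hH (n + 1)), Matrix.rank_transpose, hrankA]
  · refine rank_eq_card_of_mulVec_eq_zero _ fun v hv => hstack n v fun i => ?_
    funext α
    exact congrFun hv (i, α)
  · refine rank_eq_card_of_mulVec_eq_zero _ fun v hv => ?_
    have hvH : v ᵥ* gramMatrix L P (n + 1) = 0 := by
      refine hstack n _ fun i => ?_
      have hvC : v ᵥ* Cm n i = 0 := by
        rw [← Matrix.mulVec_transpose]
        funext γ
        exact congrFun hv (i, γ)
      rw [← Matrix.vecMul_transpose, Matrix.vecMul_vecMul, ← hCH, ← Matrix.vecMul_vecMul, hvC,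
        Matrix.zero_vecMul]
    refine Matrix.vecMul_injective_of_isUnit (isUnit_gramMatrix hL (hindep (n + 1))) ?_
    simpa using hvH
end
end

section
/- Let {ℙ_n}_{n=0}^∞ = {P_α^n : |α| = n, n ∈ ℕ}, with ℙ_0 = 1, be a sequence of real polynomials in d variables such that {P_α^m : |α| ≤ m ≤ n} spans Π_n^d for each n. Then the following are equivalent: (1) there exists a determinate measure μ ∈ M(ℝ^d) with compact support such that ∫ P_α^n P_β^m dμ = δ_{n,m} δ_{α,β} for all indices; (2) for every n ≥ 0 and 1 ≤ i ≤ d there exist matrices A_{n,i} of size r_n^d × r_{n+1}^d and symmetric matrices B_{n,i} of size r_n^d × r_n^d such that x_i ℙ_n = A_{n,i} ℙ_{n+1} + B_{n,i} ℙ_n + A_{n−1,i}ᵀ ℙ_{n−1} (A_{−1,i} := 0), rank A_{n,i} = r_n^d, the stacked matrix (A_{n,1}ᵀ, …, A_{n,d}ᵀ)ᵀ has rank r_{n+1}^d, and in addition sup_{k≥0} ‖A_{k,i}‖₂ < ∞ and sup_{k≥0} ‖B_{k,i}‖₂ < ∞ for each 1 ≤ i ≤ d, where ‖·‖₂ denotes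 the operator (spectral) norm. -/
open MvPolynomial Matrix MeasureTheory

noncomputable section

variable {d : ℕ}

/-- The `ℓ²` operator (spectral) norm of a real matrix. -/
noncomputable def l2OpNorm {m n : Type*} [Fintype m] [Fintype n] [DecidableEq n]
    (A : Matrix m n ℝ) : ℝ :=
  ‖LinearMap.toContinuousLinearMap (Matrix.toEuclideanLin A)‖

/-- `μ` has all moments finite, i.e. `μ ∈ M(ℝ^d)`. -/
def HasAllMoments (μ : Measure (Fin d → ℝ)) : Prop :=
  ∀ α : Fin d → ℕ, Integrable (fun x => ∏ i, x i ^ α i) μ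

section PositiveFunctional

variable {S : Type*} [CommRing S] [Algebra ℝ S]

/-- Multiplication by `f` is a nonnegative form for the functional `L`. -/
def IsNonnegMultiplier (L : S →ₗ[ℝ] ℝ) (f : S) : Prop := ∀ p, 0 ≤ L (f * (p * p))

theorem IsNonnegMultiplier.add {L : S →ₗ[ℝ] ℝ} {f g : S} (hf : IsNonnegMultiplier L f)
    (hg : IsNonnegMultiplier L g) : IsNonnegMultiplier L (f + g) := fun p => by
  rw [add_mul, map_add]
  exact add_nonneg (hf p) (hg p)

theorem IsNonnegMultiplier.mul_sq {L : S →ₗ[ℝ] ℝ} {f : S} (hf : IsNonnegMultiplier L f)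
    (q : S) : IsNonnegMultiplier L (f * (q * q)) := fun p => by
  have := hf (q * p)
  rwa [show f * (q * p * (q * p)) = f * (q * q) * (p * p) by ring] at this

theorem IsNonnegMultiplier.smul {L : S →ₗ[ℝ] ℝ} {f : S} (hf : IsNonnegMultiplier L f)
    {c : ℝ} (hc : 0 ≤ c) : IsNonnegMultiplier L (c • f) := fun p => by
  rw [smul_mul_assoc, map_smul, smul_eq_mul]
  exact mul_nonneg hc (hf p)

theorem sq_apply_mul_le {L : S →ₗ[ℝ] ℝ} (hL : ∀ p, 0 ≤ L (p * p)) (p q : S) :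
    L (p * q) ^ 2 ≤ L (p * p) * L (q * q) := by
  have key : ∀ t : ℝ, 0 ≤ L (q * q) * (t * t) + 2 * L (p * q) * t + L (p * p) := fun t => by
    have h := hL (p + t • q)
    have e : (p + t • q) * (p + t • q) = p * p + (2 * t) • (p * q) + (t * t) • (q * q) := by
      simp only [Algebra.smul_def, map_mul, map_ofNat]
      ring
    rw [e, map_add, map_add, map_smul, map_smul, smul_eq_mul, smul_eq_mul] at h
    linarith
  have := discrim_le_zero key
  rw [discrim] at this
  linarith

/-- The iteration `f ↦ f - f²`, used to exhaust `f` by squares. -/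
def subSqIter {S : Type*} [CommRing S] (f : S) : ℕ → S
  | 0 => f
  | n + 1 => subSqIter f n - subSqIter f n * subSqIter f n

theorem subSqIter_nonneg {L : S →ₗ[ℝ] ℝ} {f : S} (hf : IsNonnegMultiplier L f)
    (hf' : IsNonnegMultiplier L (1 - f)) (n : ℕ) :
    IsNonnegMultiplier L (subSqIter f n) ∧ IsNonnegMultiplier L (1 - subSqIter f n) := by
  have hsq : ∀ g, IsNonnegMultiplier L f → IsNonnegMultiplier L (1 - f) →
      IsNonnegMultiplier L (g * g) := fun g h h' => by
    have := (h.add h').mul_sq g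
    rwa [show (f + (1 - f)) * (g * g) = g * g by ring] at this
  induction n with
  | zero => exact ⟨hf, hf'⟩
  | succ n ih =>
    obtain ⟨h, h'⟩ := ih
    simp only [subSqIter]
    generalize subSqIter f n = g at h h'
    constructor
    · have := (h'.mul_sq g).add (h.mul_sq (1 - g))
      rwa [show (1 - g) * (g * g) + g * ((1 - g) * (1 - g)) = g - g * g by ring] at this
    · have := h'.add (hsq g hf hf')
      rwa [show 1 - g + g * g = 1 - (g - g * g) by ring] at this

theorem sum_sq_add_subSqIter {S : Type*} [CommRing S] (f : S) (n : ℕ) :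
    ∑ k ∈ Finset.range n, subSqIter f k * subSqIter f k + subSqIter f n = f := by
  induction n with
  | zero => simp [subSqIter]
  | succ n ih =>
    rw [Finset.sum_range_succ, subSqIter]
    linear_combination ih

/-- A product of nonnegative multipliers is nonnegative once one of them is bounded by `1`. -/
theorem IsNonnegMultiplier.mul {L : S →ₗ[ℝ] ℝ} {f g : S} (hg : IsNonnegMultiplier L g)
    (hf : IsNonnegMultiplier L f) (hf' : IsNonnegMultiplier L (1 - f)) :
    IsNonnegMultiplier L (f * g) := by
  intro p
  have hL : ∀ p, 0 ≤ L (p * p) := fun p => by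
    have := (hf.add hf') p
    rwa [show (f + (1 - f)) * (p * p) = p * p by ring] at this
  set u := subSqIter f with hu
  have hbound : ∀ n, ∑ k ∈ Finset.range n, L ((u k * p) * (u k * p)) ≤ L (f * (p * p)) := by
    intro n
    have h := congrArg (fun z => L (z * (p * p))) (sum_sq_add_subSqIter f n)
    simp only [add_mul, map_add, Finset.sum_mul, map_sum] at h
    have h2 := (subSqIter_nonneg hf hf' n).1 p
    have e : ∀ k, (u k * p) * (u k * p) = subSqIter f k * subSqIter f k * (p * p) := fun k => by
      rw [hu]; ring
    simp only [e]
    linarith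
  have hsum : Summable fun k => L ((u k * p) * (u k * p)) :=
    summable_of_sum_range_le (fun k => hL _) hbound
  have hlim : Filter.Tendsto (fun n => L ((u n * p) * (g * p))) Filter.atTop (nhds 0) := by
    have h0 := hsum.tendsto_atTop_zero.mul_const (L ((g * p) * (g * p)))
    rw [zero_mul] at h0
    have h1 : Filter.Tendsto (fun n => L ((u n * p) * (g * p)) ^ 2) Filter.atTop (nhds 0) :=
      squeeze_zero (fun _ => sq_nonneg _) (fun n => sq_apply_mul_le hL _ _) h0
    have h2 := h1.sqrt
    simp only [Real.sqrt_sq_eq_abs, Real.sqrt_zero] at h2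
    exact (tendsto_zero_iff_abs_tendsto_zero _).2 h2
  refine le_of_tendsto' hlim fun n => ?_
  have h := congrArg (fun z => L (z * g * (p * p))) (sum_sq_add_subSqIter f n)
  simp only [add_mul, map_add, Finset.sum_mul, map_sum] at h
  rw [← h, show u n * p * (g * p) = subSqIter f n * g * (p * p) by rw [hu]; ring]
  refine le_add_of_nonneg_left (Finset.sum_nonneg fun k _ => ?_)
  have := hg.mul_sq (subSqIter f k) p
  rwa [show g * (subSqIter f k * subSqIter f k) * (p * p) =
    subSqIter f k * subSqIter f k * g * (p * p) by ring] at this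

end PositiveFunctional

theorem sum_choose_mul_bernstein {S : Type*} [CommRing S] (y : S) (N m : ℕ) :
    ∑ k ∈ Finset.range (N + 1), ((k.choose m : ℕ) : S) *
      ((N.choose k : ℕ) * (y ^ k * (1 - y) ^ (N - k))) = (N.choose m : ℕ) * y ^ m := by
  rcases lt_or_ge N m with h | h
  · rw [Nat.choose_eq_zero_of_lt h, Nat.cast_zero, zero_mul]
    refine Finset.sum_eq_zero fun k hk => ?_
    rw [Nat.choose_eq_zero_of_lt (by grind), Nat.cast_zero, zero_mul]
  obtain ⟨n, rfl⟩ := Nat.exists_eq_add_of_le h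
  rw [add_assoc, Finset.sum_range_add, Finset.sum_eq_zero, zero_add]
  · have hb := add_pow y (1 - y) n
    rw [add_sub_cancel, one_pow] at hb
    have hb' := congrArg (fun z => (((m + n).choose m : ℕ) : S) * y ^ m * z) hb
    simp only [mul_one] at hb'
    rw [hb', Finset.mul_sum]
    clear hb hb'
    refine Finset.sum_congr rfl fun j hj => ?_
    have hj' : j ≤ n := by grind
    have hc := Nat.choose_mul (n := m + n) (k := m + j) (s := m) (by omega)
    rw [show m + n - m = n by omega, show m + j - m = j by omega] at hc
    have hc' := congrArg (Nat.cast (R := S)) hc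
    push_cast at hc'
    rw [show m + n - (m + j) = n - j by omega, pow_add]
    linear_combination (y ^ m * y ^ j * (1 - y) ^ (n - j)) * hc'
  · intro k hk
    rw [Nat.choose_eq_zero_of_lt (by grind), Nat.cast_zero, zero_mul]

theorem abs_prod_sub_prod_le {ι : Type*} (s : Finset ι) (a b : ι → ℝ)
    (ha : ∀ i ∈ s, |a i| ≤ 1) (hb : ∀ i ∈ s, |b i| ≤ 1) :
    |∏ i ∈ s, a i - ∏ i ∈ s, b i| ≤ ∑ i ∈ s, |a i - b i| := by
  classical
  induction s using Finset.induction_on with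
  | empty => simp
  | insert j s hj ih =>
    rw [Finset.prod_insert hj, Finset.prod_insert hj, Finset.sum_insert hj]
    have ih' := ih (fun i hi => ha i (Finset.mem_insert_of_mem hi))
      (fun i hi => hb i (Finset.mem_insert_of_mem hi))
    have hA : |∏ i ∈ s, a i| ≤ 1 := by
      rw [Finset.abs_prod]
      exact Finset.prod_le_one (fun _ _ => abs_nonneg _)
        fun i hi => ha i (Finset.mem_insert_of_mem hi)
    have hB := hb j (Finset.mem_insert_self _ _)
    calc |a j * ∏ i ∈ s, a i - b j * ∏ i ∈ s, b i|
        = |(a j - b j) * ∏ i ∈ s, a i + b j * (∏ i ∈ s, a i - ∏ i ∈ s, b i)| := by ring_nf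
      _ ≤ |a j - b j| * |∏ i ∈ s, a i| + |b j| * |∏ i ∈ s, a i - ∏ i ∈ s, b i| := by
        rw [← abs_mul, ← abs_mul]; exact abs_add_le _ _
      _ ≤ |a j - b j| * 1 + 1 * |∏ i ∈ s, a i - ∏ i ∈ s, b i| := by gcongr
      _ ≤ _ := by linarith

/-- The ratio of binomial coefficients `C(k,m) / C(N,m)` is close to `(k/N)^m`. -/
theorem abs_choose_div_choose_sub_le {N k m : ℕ} (hk : k ≤ N) (hm : m < N) :
    |(k.choose m : ℝ) / N.choose m - ((k : ℝ) / N) ^ m| ≤ (m : ℝ) * m / N := by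
  have hN : (0 : ℝ) < N := by exact_mod_cast (by omega : 0 < N)
  have e : (k.choose m : ℝ) / N.choose m =
      ∏ j ∈ Finset.range m, (((k - j : ℕ) : ℝ) / ((N - j : ℕ) : ℝ)) := by
    rw [Finset.prod_div_distrib, ← Nat.cast_prod, ← Nat.cast_prod,
      ← Nat.descFactorial_eq_prod_range, ← Nat.descFactorial_eq_prod_range,
      Nat.descFactorial_eq_factorial_mul_choose, Nat.descFactorial_eq_factorial_mul_choose]
    push_cast
    rw [mul_div_mul_left _ _ (by positivity)]
  have e2 : ((k : ℝ) / N) ^ m = ∏ _j ∈ Finset.range m, ((k : ℝ) / N) := by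
    rw [Finset.prod_const, Finset.card_range]
  rw [e, e2]
  refine (abs_prod_sub_prod_le _ _ _ ?_ ?_).trans ?_
  · intro j hj
    rw [abs_of_nonneg (by positivity)]
    refine div_le_one_of_le₀ ?_ (by positivity)
    exact_mod_cast Nat.sub_le_sub_right hk j
  · intro j hj
    rw [abs_of_nonneg (by positivity)]
    refine div_le_one_of_le₀ (by exact_mod_cast hk) (by positivity)
  · calc _ ≤ ∑ _j ∈ Finset.range m, (m : ℝ) / N := Finset.sum_le_sum fun j hj => ?_
      _ = _ := by simp [mul_div_assoc]
    have hj' : j < m := Finset.mem_range.1 hj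
    have hjm : (j : ℝ) ≤ m := by exact_mod_cast hj'.le
    have hkN : (k : ℝ) ≤ N := by exact_mod_cast hk
    have hjN : (0 : ℝ) < (N - j : ℕ) := by exact_mod_cast (by omega : 0 < N - j)
    refine le_trans ?_ (div_le_div_of_nonneg_right hjm hN.le)
    rcases le_or_gt k j with h | h
    · rw [Nat.sub_eq_zero_of_le h, Nat.cast_zero, zero_div, zero_sub, abs_neg,
        abs_of_nonneg (by positivity)]
      have : (k : ℝ) ≤ j := by exact_mod_cast h
      gcongr
    · have hkj : (j : ℝ) ≤ k := by exact_mod_cast h.le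
      rw [Nat.cast_sub (by omega : j ≤ N)] at hjN ⊢
      rw [Nat.cast_sub h.le]
      have e3 : ((k : ℝ) - j) / (N - j) - k / N = - (j / N * ((N - k) / (N - j))) := by
        field_simp
        ring
      rw [e3, abs_neg, abs_of_nonneg]
      · refine mul_le_of_le_one_right (by positivity) ?_
        exact div_le_one_of_le₀ (by linarith) hjN.le
      · refine mul_nonneg (by positivity) (div_nonneg (by linarith) hjN.le)

section Moments
variable {S : Type*} [CommRing S] [Algebra ℝ S]

/-- The multivariate Bernstein basis elements in the variables `y`. -/
def bernsteinProd {S : Type*} [CommRing S] {d : ℕ} (y : Fin d → S) (N : ℕ) (k : Fin d → ℕ) : S :=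
  ∏ i, ((N.choose (k i) : ℕ) * (y i ^ k i * (1 - y i) ^ (N - k i)))

theorem IsNonnegMultiplier.pow_mul {L : S →ₗ[ℝ] ℝ} {f g : S} (hg : IsNonnegMultiplier L g)
    (hf : IsNonnegMultiplier L f) (hf' : IsNonnegMultiplier L (1 - f)) (n : ℕ) :
    IsNonnegMultiplier L (f ^ n * g) := by
  induction n with
  | zero => simpa using hg
  | succ n ih =>
    rw [pow_succ', mul_assoc]
    exact ih.mul hf hf'

theorem bernsteinProd_nonneg {L : S →ₗ[ℝ] ℝ} (hL : ∀ p, 0 ≤ L (p * p)) {y : Fin d → S}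
    (hy : ∀ i, IsNonnegMultiplier L (y i)) (hy' : ∀ i, IsNonnegMultiplier L (1 - y i))
    (N : ℕ) (k : Fin d → ℕ) : 0 ≤ L (bernsteinProd y N k) := by
  have h : IsNonnegMultiplier L (bernsteinProd y N k) := by
    unfold bernsteinProd
    induction (Finset.univ : Finset (Fin d)) using Finset.induction_on with
    | empty => exact fun p => by simpa using hL p
    | insert j s hj ih =>
      rw [Finset.prod_insert hj, mul_assoc, mul_assoc, ← nsmul_eq_mul, ← Nat.cast_smul_eq_nsmul ℝ]
      refine IsNonnegMultiplier.smul ?_ (Nat.cast_nonneg _)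
      refine (ih.pow_mul (hy' j) ?_ _).pow_mul (hy j) (hy' j) _
      rw [sub_sub_cancel]
      exact hy j
  simpa using h 1

theorem sum_choose_mul_bernsteinProd {S : Type*} [CommRing S] {d : ℕ} (y : Fin d → S) (N : ℕ) (α : Fin d → ℕ) :
    ∑ k ∈ Fintype.piFinset fun _ : Fin d => Finset.range (N + 1),
      ((∏ i, (k i).choose (α i) : ℕ) : S) * bernsteinProd y N k =
        ((∏ i, N.choose (α i) : ℕ) : S) * ∏ i, y i ^ α i := by
  push_cast
  rw [← Finset.prod_mul_distrib]
  simp_rw [← sum_choose_mul_bernstein (y _) N]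
  rw [Finset.prod_univ_sum]
  simp only [bernsteinProd, Finset.prod_mul_distrib]

/-- The discrete measure with masses `L (bernsteinProd y N k)` at the points `k / N`. -/
noncomputable def bernsteinMeasure (L : S →ₗ[ℝ] ℝ) (y : Fin d → S) (N : ℕ) :
    Measure (Fin d → unitInterval) :=
  ∑ k ∈ Fintype.piFinset fun _ : Fin d => Finset.range (N + 1),
    ENNReal.ofReal (L (bernsteinProd y N k)) •
      Measure.dirac fun i => Set.projIcc (0 : ℝ) 1 zero_le_one ((k i : ℝ) / N)

instance (L : S →ₗ[ℝ] ℝ) (y : Fin d → S) (N : ℕ) : IsFiniteMeasure (bernsteinMeasure L y N) := by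
  unfold bernsteinMeasure
  constructor
  rw [Measure.finsetSum_apply]
  refine ENNReal.sum_lt_top.2 fun k _ => ?_
  simp

theorem integral_bernsteinMeasure {L : S →ₗ[ℝ] ℝ} {y : Fin d → S} {N : ℕ}
    (h : ∀ k, 0 ≤ L (bernsteinProd y N k)) (α : Fin d → ℕ) :
    ∫ t, ∏ i, (t i : ℝ) ^ α i ∂(bernsteinMeasure L y N) =
      ∑ k ∈ Fintype.piFinset fun _ : Fin d => Finset.range (N + 1),
        L (bernsteinProd y N k) * ∏ i, ((k i : ℝ) / N) ^ α i := by
  have hc : Continuous fun t : Fin d → unitInterval => ∏ i, (t i : ℝ) ^ α i := by fun_prop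
  unfold bernsteinMeasure
  rw [integral_finsetSum_measure]
  · refine Finset.sum_congr rfl fun k hk => ?_
    rw [integral_smul_measure, integral_dirac, ENNReal.toReal_ofReal (h k), smul_eq_mul]
    congr 1
    refine Finset.prod_congr rfl fun i _ => ?_
    beta_reduce
    rw [Set.projIcc_of_mem zero_le_one]
    have hki : k i ≤ N := by
      have := Fintype.mem_piFinset.1 hk i
      grind
    exact ⟨by positivity, div_le_one_of_le₀ (by exact_mod_cast hki) (by positivity)⟩
  · intro k _
    refine Integrable.smul_measure ?_ ENNReal.ofReal_ne_top
    exact hc.integrable_of_hasCompactSupport (HasCompactSupport.of_compactSpace _)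

theorem sum_bernsteinProd {S : Type*} [CommRing S] {d : ℕ} (y : Fin d → S) (N : ℕ) :
    ∑ k ∈ Fintype.piFinset fun _ : Fin d => Finset.range (N + 1), bernsteinProd y N k = 1 := by
  simpa using sum_choose_mul_bernsteinProd y N 0

theorem tendsto_integral_bernsteinMeasure {L : S →ₗ[ℝ] ℝ} {y : Fin d → S} (h1 : L 1 = 1)
    (h : ∀ N k, 0 ≤ L (bernsteinProd y N k)) (α : Fin d → ℕ) :
    Filter.Tendsto (fun N => ∫ t, ∏ i, (t i : ℝ) ^ α i ∂(bernsteinMeasure L y N)) Filter.atTop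
      (nhds (L (∏ i, y i ^ α i))) := by
  rw [tendsto_iff_dist_tendsto_zero]
  have hlim : Filter.Tendsto (fun N : ℕ => (∑ i, (α i : ℝ) * α i) / N) Filter.atTop (nhds 0) :=
    tendsto_const_div_atTop_nhds_zero_nat _
  refine squeeze_zero' (Filter.Eventually.of_forall fun _ => dist_nonneg) ?_ hlim
  filter_upwards [Filter.eventually_gt_atTop (∑ i, α i)] with N hN
  have hα : ∀ i, α i < N := fun i =>
    (Finset.single_le_sum (fun _ _ => Nat.zero_le _) (Finset.mem_univ i)).trans_lt hN
  have hmom : L (∏ i, y i ^ α i) = ∑ k ∈ Fintype.piFinset fun _ : Fin d => Finset.range (N + 1),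
      L (bernsteinProd y N k) * ∏ i, ((k i).choose (α i) : ℝ) / N.choose (α i) := by
    have hc : (∏ i, (N.choose (α i) : ℝ)) ≠ 0 := Finset.prod_ne_zero_iff.2 fun i _ => by
      exact_mod_cast (Nat.choose_pos (hα i).le).ne'
    have e := congrArg L (sum_choose_mul_bernsteinProd y N α)
    have hcast : ∀ (c : ℕ) (z : S), L ((c : S) * z) = (c : ℝ) * L z := fun c z => by
      rw [← nsmul_eq_mul, map_nsmul, nsmul_eq_mul]
    rw [map_sum] at e
    simp only [hcast] at e
    push_cast at e
    rw [← mul_right_inj' hc, ← e, Finset.mul_sum]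
    refine Finset.sum_congr rfl fun k _ => ?_
    rw [Finset.prod_div_distrib]
    field_simp
  rw [integral_bernsteinMeasure (h N), hmom, Real.dist_eq, ← Finset.sum_sub_distrib]
  have hone : ∑ k ∈ Fintype.piFinset fun _ : Fin d => Finset.range (N + 1),
      L (bernsteinProd y N k) = 1 := by rw [← map_sum, sum_bernsteinProd, h1]
  calc _ ≤ ∑ k ∈ Fintype.piFinset fun _ : Fin d => Finset.range (N + 1),
        L (bernsteinProd y N k) * ((∑ i, (α i : ℝ) * α i) / N) := ?_
    _ = _ := by rw [← Finset.sum_mul, hone, one_mul]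
  refine (Finset.abs_sum_le_sum_abs _ _).trans (Finset.sum_le_sum fun k hk => ?_)
  have hk' : ∀ i, k i ≤ N := fun i => by
    have := Fintype.mem_piFinset.1 hk i
    grind
  rw [← mul_sub, abs_mul, abs_of_nonneg (h N k)]
  refine mul_le_mul_of_nonneg_left ?_ (h N k)
  rw [abs_sub_comm, Finset.sum_div]
  refine (abs_prod_sub_prod_le _ _ _ ?_ ?_).trans
    (Finset.sum_le_sum fun i _ => abs_choose_div_choose_sub_le (hk' i) (hα i))
  · intro i _
    rw [abs_of_nonneg (by positivity)]
    exact div_le_one_of_le₀ (by exact_mod_cast Nat.choose_le_choose _ (hk' i)) (by positivity)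
  · intro i _
    rw [abs_of_nonneg (by positivity)]
    exact pow_le_one₀ (by positivity)
      (div_le_one_of_le₀ (by exact_mod_cast hk' i) (by positivity))

theorem exists_measure_unitInterval {L : S →ₗ[ℝ] ℝ} {y : Fin d → S} (h1 : L 1 = 1)
    (hL : ∀ p, 0 ≤ L (p * p))
    (hy : ∀ i, IsNonnegMultiplier L (y i)) (hy' : ∀ i, IsNonnegMultiplier L (1 - y i)) :
    ∃ μ : Measure (Fin d → unitInterval), IsFiniteMeasure μ ∧
      ∀ α : Fin d → ℕ, ∫ t, ∏ i, (t i : ℝ) ^ α i ∂μ = L (∏ i, y i ^ α i) := by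
  have h := bernsteinProd_nonneg hL hy hy'
  let m : ℕ → FiniteMeasure (Fin d → unitInterval) := fun N =>
    ⟨bernsteinMeasure L y N, inferInstance⟩
  have hm : ∀ N, m N ∈ {μ : FiniteMeasure (Fin d → unitInterval) | μ.mass ≤ 1} := by
    intro N
    have e := integral_bernsteinMeasure (h N) (fun _ => 0)
    simp only [pow_zero, Finset.prod_const_one, mul_one, ← map_sum, sum_bernsteinProd, h1,
      integral_const, smul_eq_mul] at e
    have : ((m N).mass : ℝ) = 1 := e
    exact (NNReal.coe_injective (by simpa using this)).le
  have hcpt := isCompact_setOfPred_finiteMeasure_le_of_compactSpace (Fin d → unitInterval) 1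
  obtain ⟨μ, -, hμ⟩ := isCompact_iff_ultrafilter_le_nhds.1 hcpt
    ((Filter.hyperfilter ℕ).map m) 
    (Filter.le_principal_iff.2 (Filter.mem_map.2 (by simp [hm, Set.preimage])))
  have hμ' : Filter.Tendsto m (Filter.hyperfilter ℕ : Filter ℕ) (nhds μ) := hμ
  refine ⟨μ, inferInstance, fun α => ?_⟩
  have hc : Continuous fun t : Fin d → unitInterval => ∏ i, (t i : ℝ) ^ α i := by fun_prop
  have hlim := FiniteMeasure.tendsto_iff_forall_integral_tendsto.1 hμ'
    (BoundedContinuousFunction.mkOfCompact ⟨_, hc⟩)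
  exact tendsto_nhds_unique hlim
    ((tendsto_integral_bernsteinMeasure h1 h α).mono_left Nat.hyperfilter_le_atTop)

end Moments

/-- A positive functional on polynomials for which every coordinate multiplication is bounded
by `R` is integration against a measure on the cube `[-R, R]^d`. -/
theorem exists_measure_of_bounded {d : ℕ} {L : MvPolynomial (Fin d) ℝ →ₗ[ℝ] ℝ} (h1 : L 1 = 1)
    (hL : ∀ p, 0 ≤ L (p * p)) {R : ℝ} (hR : 0 < R)
    (hb : ∀ i p, |L (X i * (p * p))| ≤ R * L (p * p)) :
    ∃ μ : Measure (Fin d → ℝ), IsFiniteMeasure μ ∧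
      μ (Set.univ.pi fun _ => Set.Icc (-R) R)ᶜ = 0 ∧
      ∀ p : MvPolynomial (Fin d) ℝ, ∫ x, eval x p ∂μ = L p := by
  let y : Fin d → MvPolynomial (Fin d) ℝ := fun i => C (2 * R)⁻¹ * (X i + C R)
  have hy : ∀ i, IsNonnegMultiplier L (y i) := fun i p => by
    have e : y i * (p * p) = (2 * R)⁻¹ • (X i * (p * p) + R • (p * p)) := by
      simp only [y, smul_eq_C_mul]; ring
    rw [e, map_smul, map_add, map_smul, smul_eq_mul, smul_eq_mul]
    exact mul_nonneg (by positivity) (by linarith [neg_le_of_abs_le (hb i p)])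
  have hy' : ∀ i, IsNonnegMultiplier L (1 - y i) := fun i p => by
    have hC : (C (2 * R)⁻¹ * C (2 * R) : MvPolynomial (Fin d) ℝ) = 1 := by
      rw [← C_mul, inv_mul_cancel₀ (by positivity), C_1]
    have hC2 : (C (2 * R) : MvPolynomial (Fin d) ℝ) = C R + C R := by rw [← C_add, two_mul]
    have e : (1 - y i) * (p * p) = (2 * R)⁻¹ • (R • (p * p) - X i * (p * p)) := by
      simp only [y, smul_eq_C_mul]
      rw [hC2] at hC
      linear_combination - (p * p) * hC
    rw [e, map_smul, map_sub, map_smul, smul_eq_mul, smul_eq_mul]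
    exact mul_nonneg (by positivity) (by linarith [le_of_abs_le (hb i p)])
  obtain ⟨ν, hν, hmom⟩ := exists_measure_unitInterval h1 hL hy hy'
  let φ : (Fin d → unitInterval) → (Fin d → ℝ) := fun t i => 2 * R * t i - R
  have hφ : Continuous φ := by fun_prop
  -- in the rescaled variables `y`, every polynomial is a polynomial in `X`
  have hcomp : ∀ q : MvPolynomial (Fin d) ℝ, ∫ t, eval (fun i => (t i : ℝ)) q ∂ν = L (aeval y q) := by
    intro q
    have hintg : ∀ r : MvPolynomial (Fin d) ℝ,
        Integrable (fun t : Fin d → unitInterval => eval (fun i => (t i : ℝ)) r) ν := fun r => by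
      have hc : Continuous fun t : Fin d → unitInterval => eval (fun i => (t i : ℝ)) r :=
        (MvPolynomial.continuous_eval r).comp (by fun_prop)
      exact hc.integrable_of_hasCompactSupport (HasCompactSupport.of_compactSpace _)
    induction q using MvPolynomial.induction_on' with
    | monomial u a =>
      have e : ∀ t : Fin d → unitInterval, eval (fun i => (t i : ℝ)) (monomial u a) =
          a * ∏ i, (t i : ℝ) ^ u i := fun t => by
        rw [eval_monomial, Finsupp.prod_fintype _ _ (by simp)]
      simp only [e]
      rw [integral_const_mul, hmom, aeval_monomial, Finsupp.prod_fintype _ _ (by simp),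
        ← Algebra.smul_def, map_smul, smul_eq_mul]
    | add p q hp hq =>
      simp only [map_add]
      rw [integral_add (hintg p) (hintg q), hp, hq]
  refine ⟨ν.map φ, inferInstance, ?_, fun p => ?_⟩
  · rw [Measure.map_apply hφ.measurable
      (MeasurableSet.univ_pi fun _ => measurableSet_Icc).compl]
    convert measure_empty (μ := ν)
    rw [Set.eq_empty_iff_forall_notMem]
    intro t ht
    refine ht fun i _ => ?_
    have h0 := (t i).2.1
    have h2 := (t i).2.2
    constructor <;> simp only [φ] <;> nlinarith
  · rw [integral_map hφ.aemeasurable (MvPolynomial.continuous_eval p).aestronglyMeasurable]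
    have h := hcomp (aeval (fun i => C (2 * R) * X i - C R) p)
    have e1 : ∀ t : Fin d → unitInterval, eval (fun i => (t i : ℝ))
        (aeval (fun i => C (2 * R) * X i - C R) p) = eval (φ t) p := fun t => by
      rw [← coe_aeval_eq_eval, ← coe_aeval_eq_eval]
      simp only [RingHom.coe_coe]
      rw [← AlgHom.comp_apply, comp_aeval]
      congr 2
      funext i
      simp [φ]
    have e2 : aeval y (aeval (fun i => C (2 * R) * X i - C R) p) = p := by
      rw [← AlgHom.comp_apply, comp_aeval]
      convert AlgHom.id_apply (R := ℝ) p
      refine MvPolynomial.algHom_ext fun i => ?_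
      have hC : (C (2 * R) * C (2 * R)⁻¹ : MvPolynomial (Fin d) ℝ) = 1 := by
        rw [← C_mul, mul_inv_cancel₀ (by positivity), C_1]
      simp only [aeval_X, map_sub, map_mul, aeval_C, algebraMap_eq, AlgHom.id_apply, y]
      rw [C_mul] at hC
      linear_combination (X i + C R) * hC
    simpa only [e1, e2] using h

theorem isFiniteMeasure_of_moments {d : ℕ} {ν : Measure (Fin d → ℝ)}
    (hν : ∀ α : Fin d → ℕ, Integrable (fun x => ∏ i, x i ^ α i) ν) : IsFiniteMeasure ν := by
  have h := hν 0
  simp only [Pi.zero_apply, pow_zero, Finset.prod_const_one] at h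
  exact (integrable_const_iff.1 h).resolve_left one_ne_zero

/-- Measures with the moments of a measure on a cube live on that cube. -/
theorem measure_cube_compl_eq_zero {d : ℕ} {μ ν : Measure (Fin d → ℝ)} [IsFiniteMeasure μ]
    {R : ℝ} (hR : 0 < R) (hμ : μ (Set.univ.pi fun _ => Set.Icc (-R) R)ᶜ = 0)
    (hν : ∀ α : Fin d → ℕ, Integrable (fun x => ∏ i, x i ^ α i) ν)
    (h : ∀ α : Fin d → ℕ, ∫ x, ∏ i, x i ^ α i ∂ν = ∫ x, ∏ i, x i ^ α i ∂μ) :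
    ν (Set.univ.pi fun _ => Set.Icc (-R) R)ᶜ = 0 := by
  have := isFiniteMeasure_of_moments hν
  have hae : ∀ᵐ x ∂μ, x ∈ Set.univ.pi fun _ : Fin d => Set.Icc (-R) R := by rwa [ae_iff]
  have hpow : ∀ (i : Fin d) (k : ℕ) (x : Fin d → ℝ),
      ∏ j, x j ^ (Pi.single i k : Fin d → ℕ) j = x i ^ k := fun i k x => by
    rw [Finset.prod_eq_single i (fun j _ hj => by simp [hj]) (by simp)]
    simp
  have hfar : ∀ (i : Fin d) (c : ℝ), R < c → ν {x | c ≤ |x i|} = 0 := by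
    intro i c hc
    have hcpos : 0 < c := hR.trans hc
    have hbound : ∀ k : ℕ, ν.real {x | c ≤ |x i|} ≤ ((R / c) ^ 2) ^ k * μ.real Set.univ := by
      intro k
      have hi := hν (Pi.single i (2 * k))
      have he := h (Pi.single i (2 * k))
      simp only [hpow] at hi he
      have hm := mul_meas_ge_le_integral_of_nonneg (μ := ν) (f := fun x => x i ^ (2 * k))
        (Filter.Eventually.of_forall fun x => by
          simp only [pow_mul, Pi.zero_apply]; positivity) hi (c ^ (2 * k))
      have hsub : ν.real {x | c ≤ |x i|} ≤ ν.real {x | c ^ (2 * k) ≤ x i ^ (2 * k)} := by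
        refine measureReal_mono fun x hx => ?_
        simp only [Set.mem_ofPred_eq] at hx ⊢
        rw [pow_mul, pow_mul, ← sq_abs (x i)]
        gcongr
      have hle : ∫ x, x i ^ (2 * k) ∂μ ≤ R ^ (2 * k) * μ.real Set.univ := by
        refine (le_abs_self _).trans ?_
        rw [← Real.norm_eq_abs]
        refine norm_integral_le_of_norm_le_const ?_
        filter_upwards [hae] with x hx
        have := hx i (Set.mem_univ i)
        rw [norm_pow, Real.norm_eq_abs]
        gcongr
        exact abs_le.2 this
      rw [he] at hm
      have h4 : c ^ (2 * k) * ν.real {x | c ≤ |x i|} ≤ R ^ (2 * k) * μ.real Set.univ :=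
        (mul_le_mul_of_nonneg_left hsub (by positivity)).trans (hm.trans hle)
      rw [← pow_mul, div_pow, div_mul_eq_mul_div, le_div_iff₀ (by positivity)]
      linarith
    have hlim : Filter.Tendsto (fun k : ℕ => ((R / c) ^ 2) ^ k * μ.real Set.univ) Filter.atTop
        (nhds (0 * μ.real Set.univ)) := by
      refine (tendsto_pow_atTop_nhds_zero_of_lt_one (by positivity) ?_).mul_const _
      exact pow_lt_one₀ (by positivity) ((div_lt_one hcpos).2 hc) two_ne_zero
    rw [zero_mul] at hlim
    have h0 := le_antisymm (ge_of_tendsto' hlim hbound) measureReal_nonneg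
    exact (measureReal_eq_zero_iff).1 h0
  refine measure_mono_null (t := ⋃ i : Fin d, ⋃ n : ℕ, {x | R + 1 / (n + 1) ≤ |x i|}) ?_ ?_
  · intro x hx
    simp only [Set.mem_compl_iff, Set.mem_univ_pi, not_forall, ← abs_le, not_le,
      Set.mem_Icc] at hx
    obtain ⟨i, hi⟩ := hx
    obtain ⟨n, hn⟩ := exists_nat_one_div_lt (sub_pos.2 hi)
    simp only [Set.mem_iUnion, Set.mem_ofPred_eq]
    exact ⟨i, n, by linarith⟩
  · exact measure_iUnion_null fun i => measure_iUnion_null fun n =>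
      hfar i _ (lt_add_of_pos_right _ (by positivity))

theorem ext_of_moments_of_cube {d : ℕ} {μ ν : Measure (Fin d → ℝ)} [IsFiniteMeasure μ]
    [IsFiniteMeasure ν] {R : ℝ}
    (hμ : μ (Set.univ.pi fun _ => Set.Icc (-R) R)ᶜ = 0)
    (hν : ν (Set.univ.pi fun _ => Set.Icc (-R) R)ᶜ = 0)
    (h : ∀ p : MvPolynomial (Fin d) ℝ, ∫ x, eval x p ∂ν = ∫ x, eval x p ∂μ) : ν = μ := by
  set K : Set (Fin d → ℝ) := Set.univ.pi fun _ => Set.Icc (-R) R with hK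
  have hKc : IsCompact K := isCompact_univ_pi fun _ => isCompact_Icc
  have : CompactSpace K := isCompact_iff_compactSpace.1 hKc
  refine ext_of_forall_integral_eq_of_IsFiniteMeasure fun f => ?_
  let Φ : MvPolynomial (Fin d) ℝ →ₐ[ℝ] C(K, ℝ) :=
    aeval fun i => ⟨fun x => (x : Fin d → ℝ) i, (continuous_apply i).comp continuous_subtype_val⟩
  have hΦ : ∀ p (x : K), Φ p x = eval (x : Fin d → ℝ) p := fun p x => by
    induction p using MvPolynomial.induction_on with
    | C a => simp [Φ]
    | add p q hp hq => simp [hp, hq]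
    | mul_X p i hp => simp [hp]; simp [Φ]
  have hsep : Φ.range.SeparatesPoints := by
    intro x z hxz
    obtain ⟨i, hi⟩ := Function.ne_iff.1 (fun h => hxz (Subtype.ext h))
    exact ⟨Φ (X i), ⟨_, ⟨X i, rfl⟩, rfl⟩, by simpa [hΦ] using hi⟩
  have hdense := ContinuousMap.subalgebra_topologicalClosure_eq_top_of_separatesPoints _ hsep
  have hintg : ∀ (ρ : Measure (Fin d → ℝ)) [IsFiniteMeasure ρ], ρ Kᶜ = 0 →
      ∀ g : (Fin d → ℝ) → ℝ, Continuous g → Integrable g ρ := fun ρ _ hρ g hg => by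
    have hr : ρ = ρ.restrict K := (Measure.restrict_eq_self_of_ae_mem (by
      rwa [ae_iff])).symm
    rw [hr]
    exact hg.continuousOn.integrableOn_compact hKc
  refine eq_of_forall_dist_le fun ε hε => ?_
  set c : ℝ := ν.real Set.univ + μ.real Set.univ + 1 with hc
  have hcpos : 0 < c := by positivity
  let F : C(K, ℝ) := ⟨fun x => f x, by fun_prop⟩
  have hF : F ∈ closure (Φ.range : Set C(K, ℝ)) := by
    rw [← Subalgebra.topologicalClosure_coe, hdense]; trivial
  obtain ⟨_, ⟨p, rfl⟩, hp⟩ := Metric.mem_closure_iff.1 hF (ε / c) (by positivity)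
  have hclose : ∀ x ∈ K, |f x - eval x p| ≤ ε / c := fun x hx => by
    have := (ContinuousMap.dist_apply_le_dist (f := F) (g := Φ p) ⟨x, hx⟩).trans hp.le
    rwa [Real.dist_eq, hΦ] at this
  have hest : ∀ (ρ : Measure (Fin d → ℝ)) [IsFiniteMeasure ρ], ρ Kᶜ = 0 →
      |∫ x, f x ∂ρ - ∫ x, eval x p ∂ρ| ≤ ε / c * ρ.real Set.univ := fun ρ _ hρ => by
    rw [← integral_sub (hintg ρ hρ _ f.continuous) (hintg ρ hρ _ (MvPolynomial.continuous_eval p))]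
    rw [← Real.norm_eq_abs]
    refine norm_integral_le_of_norm_le_const (μ := ρ) ?_
    have : ∀ᵐ x ∂ρ, x ∈ K := by rwa [ae_iff]
    filter_upwards [this] with x hx using hclose x hx
  rw [Real.dist_eq]
  have h1 := hest ν hν
  have h2 := hest μ hμ
  rw [h p] at h1
  have h3 : ε / c * ν.real Set.univ + ε / c * μ.real Set.univ ≤ ε := by
    rw [← mul_add, div_mul_eq_mul_div, div_le_iff₀ hcpos]
    nlinarith
  rw [abs_le] at h1 h2 ⊢
  constructor <;> linarith [h1.1, h1.2, h2.1, h2.2]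

theorem SpansPi.mem_degree_le {P : ∀ n, Idx d n → MPoly d} (hspan : SpansPi P)
    {m n : ℕ} (hmn : m ≤ n) (α : Idx d m) : P m α ∈ restrictTotalDegree (Fin d) ℝ n := by
  rw [← hspan n]
  exact Submodule.subset_span ⟨m, hmn, α, rfl⟩

theorem mono_mem_restrictTotalDegree {m n : ℕ} (hmn : m ≤ n) (α : Idx d m) :
    mono α.1 ∈ restrictTotalDegree (Fin d) ℝ n := by
  rw [mem_restrictTotalDegree, mono]
  refine (totalDegree_monomial_le _ _).trans ?_
  rw [Finsupp.sum_fintype _ _ (fun _ => rfl)]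
  simpa using α.2.le.trans hmn

instance (n : ℕ) : Module.Finite ℝ (restrictTotalDegree (Fin d) ℝ n) := by
  have : Finite {s : Fin d →₀ ℕ | (s.sum fun _ e => e) ≤ n} := by
    refine Finite.of_injective (β := IdxLe d n) (fun s => ⟨s.1, ?_⟩) ?_
    · have := s.2
      rwa [Set.mem_ofPred_eq, Finsupp.sum_fintype _ _ (fun _ => rfl)] at this
    · intro s t h
      exact Subtype.ext (DFunLike.coe_injective (congrArg Subtype.val h))
  exact Module.Finite.of_basis (basisRestrictSupport ℝ _)

theorem SpansPi.linearIndependent_le {P : ∀ n, Idx d n → MPoly d} (hspan : SpansPi P) (n : ℕ) :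
    LinearIndependent ℝ fun s : Σ m : Fin (n + 1), Idx d m => P s.1 s.2 := by
  let V := restrictTotalDegree (Fin d) ℝ n
  have hle : ∀ m : Fin (n + 1), (m : ℕ) ≤ n := fun m => Nat.lt_succ_iff.1 m.2
  let v : (Σ m : Fin (n + 1), Idx d m) → V := fun s =>
    ⟨P s.1 s.2, hspan.mem_degree_le (hle s.1) s.2⟩
  let w : (Σ m : Fin (n + 1), Idx d m) → V := fun s =>
    ⟨mono s.2.1, mono_mem_restrictTotalDegree (hle s.1) s.2⟩
  have hw : LinearIndependent ℝ w := by
    refine LinearIndependent.of_comp V.subtype ?_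
    refine (basisMonomials (Fin d) ℝ).linearIndependent.comp
      (fun s : Σ m : Fin (n + 1), Idx d m => Finsupp.equivFunOnFinite.symm s.2.1) ?_
    rintro ⟨⟨m, hm⟩, ⟨α, hα⟩⟩ ⟨⟨m', hm'⟩, ⟨β, hβ⟩⟩ h
    obtain rfl : α = β := Finsupp.equivFunOnFinite.symm.injective h
    obtain rfl : m = m' := hα.symm.trans hβ
    rfl
  have hv : LinearIndependent ℝ v := by
    refine linearIndependent_of_top_le_span_of_card_le_finrank ?_ hw.fintype_card_le_finrank
    rintro ⟨x, hx⟩ -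
    have hV : V ≤ (Submodule.span ℝ (Set.range v)).map V.subtype := by
      rw [Submodule.map_span]
      refine (hspan n).ge.trans (Submodule.span_mono ?_)
      rintro _ ⟨m, hm, α, rfl⟩
      exact ⟨_, ⟨⟨⟨m, Nat.lt_succ_iff.2 hm⟩, α⟩, rfl⟩, rfl⟩
    obtain ⟨y, hy, rfl⟩ := hV hx
    exact hy
  exact hv.map' V.subtype V.ker_subtype

theorem SpansPi.linearIndependent {P : ∀ n, Idx d n → MPoly d} (hspan : SpansPi P) :
    LinearIndependent ℝ fun s : Σ m, Idx d m => P s.1 s.2 := by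
  rw [linearIndependent_iff_finset_linearIndependent]
  intro t
  obtain ⟨N, hN⟩ : ∃ N, ∀ s ∈ t, s.1 ≤ N :=
    ⟨t.sup fun s => s.1, fun s hs => Finset.le_sup (f := fun s : Σ m, Idx d m => s.1) hs⟩
  refine (hspan.linearIndependent_le N).comp
    (fun s : t => (⟨⟨s.1.1, Nat.lt_succ_iff.2 (hN _ s.2)⟩, s.1.2⟩ : Σ m : Fin (N + 1), Idx d m)) ?_
  rintro ⟨⟨m, α⟩, hs⟩ ⟨⟨m', β⟩, hs'⟩ h
  simp only [Sigma.mk.injEq, Fin.mk.injEq] at h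
  obtain ⟨rfl, h⟩ := h
  rw [heq_eq_eq] at h
  subst h
  rfl

/-- The family `P` as a basis of the space of polynomials. -/
def SpansPi.basis {P : ∀ n, Idx d n → MPoly d} (hspan : SpansPi P) :
    Module.Basis (Σ m, Idx d m) ℝ (MPoly d) :=
  Module.Basis.mk hspan.linearIndependent (by
    intro p _
    have hp : p ∈ restrictTotalDegree (Fin d) ℝ p.totalDegree := by
      rw [mem_restrictTotalDegree]
    rw [← hspan] at hp
    refine Submodule.span_mono ?_ hp
    rintro _ ⟨m, -, α, rfl⟩
    exact ⟨⟨m, α⟩, rfl⟩)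

theorem SpansPi.basis_apply {P : ∀ n, Idx d n → MPoly d} (hspan : SpansPi P) (n : ℕ)
    (α : Idx d n) : hspan.basis ⟨n, α⟩ = P n α := by
  simp [SpansPi.basis]

theorem SpansPi.repr_eq_zero {P : ∀ n, Idx d n → MPoly d} (hspan : SpansPi P) {n m : ℕ}
    {p : MPoly d} (hp : p ∈ restrictTotalDegree (Fin d) ℝ n) (hnm : n < m) (α : Idx d m) :
    hspan.basis.repr p ⟨m, α⟩ = 0 := by
  rw [← hspan n] at hp
  induction hp using Submodule.span_induction with
  | mem x hx =>
    obtain ⟨k, hk, β, rfl⟩ := hx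
    rw [← hspan.basis_apply, Module.Basis.repr_self, Finsupp.single_apply, if_neg]
    rintro ⟨⟩
    omega
  | zero => simp
  | add x y _ _ hx hy => simp [hx, hy]
  | smul a x _ hx => simp [hx]

/-- The linear combination of the members of `P` of level `n` with coefficients `v`. -/
def levelSum (P : ∀ n, Idx d n → MPoly d) (n : ℕ) (v : Idx d n → ℝ) : MPoly d :=
  ∑ α, v α • P n α

theorem SpansPi.levelSum_mem {P : ∀ n, Idx d n → MPoly d} (hspan : SpansPi P) {n k : ℕ}
    (hnk : n ≤ k) (v : Idx d n → ℝ) : levelSum P n v ∈ restrictTotalDegree (Fin d) ℝ k :=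
  Submodule.sum_mem _ fun α _ => Submodule.smul_mem _ _ (hspan.mem_degree_le hnk α)

theorem SpansPi.repr_levelSum_self {P : ∀ n, Idx d n → MPoly d} (hspan : SpansPi P) (n : ℕ)
    (v : Idx d n → ℝ) (β : Idx d n) : hspan.basis.repr (levelSum P n v) ⟨n, β⟩ = v β := by
  simp only [levelSum, ← hspan.basis_apply, map_sum, map_smul, Module.Basis.repr_self,
    Finsupp.finsetSum_apply, Finsupp.smul_apply, smul_eq_mul]
  rw [Finset.sum_eq_single β]
  · simp
  · intro α _ hα
    rw [Finsupp.single_apply, if_neg, mul_zero]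
    rintro ⟨⟩
    exact hα rfl
  · simp

theorem SpansPi.repr_levelSum_of_ne {P : ∀ n, Idx d n → MPoly d} (hspan : SpansPi P) {n m : ℕ}
    (hnm : n ≠ m) (v : Idx d n → ℝ) (β : Idx d m) :
    hspan.basis.repr (levelSum P n v) ⟨m, β⟩ = 0 := by
  simp only [levelSum, ← hspan.basis_apply, map_sum, map_smul, Module.Basis.repr_self,
    Finsupp.finsetSum_apply, Finsupp.smul_apply, smul_eq_mul]
  refine Finset.sum_eq_zero fun α _ => ?_
  rw [Finsupp.single_apply, if_neg, mul_zero]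
  rintro ⟨⟩
  exact hnm rfl

theorem SpansPi.mem_of_repr_eq_zero {P : ∀ n, Idx d n → MPoly d} (hspan : SpansPi P) {n : ℕ}
    {p : MPoly d} (hp : ∀ m, n < m → ∀ α : Idx d m, hspan.basis.repr p ⟨m, α⟩ = 0) :
    p ∈ restrictTotalDegree (Fin d) ℝ n := by
  rw [← hspan.basis.linearCombination_repr p, Finsupp.linearCombination_apply]
  refine Submodule.sum_mem _ fun s hs => Submodule.smul_mem _ _ ?_
  obtain ⟨m, α⟩ := s
  rw [hspan.basis_apply]
  refine hspan.mem_degree_le ?_ α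
  by_contra h
  exact Finsupp.mem_support_iff.1 hs (hp m (not_le.1 h) α)

theorem SpansPi.eq_sum_levelSum {P : ∀ n, Idx d n → MPoly d} (hspan : SpansPi P) (p : MPoly d) :
    p = ∑ n ∈ Finset.range (p.totalDegree + 1),
      levelSum P n fun α => hspan.basis.repr p ⟨n, α⟩ := by
  refine hspan.basis.ext_elem fun ⟨m, β⟩ => ?_
  rw [map_sum, Finsupp.finsetSum_apply]
  rcases lt_or_ge m (p.totalDegree + 1) with h | h
  · rw [Finset.sum_eq_single_of_mem m (Finset.mem_range.2 h)
      fun n _ hn => hspan.repr_levelSum_of_ne hn _ _, hspan.repr_levelSum_self]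
  · rw [hspan.repr_eq_zero ((mem_restrictTotalDegree _ _ p).2 le_rfl) h, Finset.sum_eq_zero]
    intro n hn
    exact hspan.repr_levelSum_of_ne (by grind) _ _

theorem X_mul_mem {n : ℕ} (i : Fin d) {p : MPoly d} (hp : p ∈ restrictTotalDegree (Fin d) ℝ n) :
    X i * p ∈ restrictTotalDegree (Fin d) ℝ (n + 1) := by
  rw [mem_restrictTotalDegree] at hp ⊢
  refine (totalDegree_mul _ _).trans ?_
  rw [totalDegree_X]
  omega

/-- The family `P` is orthonormal with respect to the functional `L`. -/
structure IsOrthonormalFor (L : MPoly d →ₗ[ℝ] ℝ) (P : ∀ n, Idx d n → MPoly d) : Prop where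
  self : ∀ n (α β : Idx d n), L (P n α * P n β) = if α = β then 1 else 0
  of_ne : ∀ n m : ℕ, n ≠ m → ∀ (α : Idx d n) (β : Idx d m), L (P n α * P m β) = 0

namespace IsOrthonormalFor

variable {L : MPoly d →ₗ[ℝ] ℝ} {P : ∀ n, Idx d n → MPoly d}

theorem apply_mul_eq_repr (hL : IsOrthonormalFor L P) (hspan : SpansPi P) (p : MPoly d) (n : ℕ)
    (α : Idx d n) : L (p * P n α) = hspan.basis.repr p ⟨n, α⟩ := by
  have h : L ∘ₗ LinearMap.mulRight ℝ (P n α) = hspan.basis.coord ⟨n, α⟩ := by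
    refine hspan.basis.ext fun ⟨m, β⟩ => ?_
    rw [LinearMap.comp_apply, LinearMap.mulRight_apply, Module.Basis.coord_apply,
      Module.Basis.repr_self, hspan.basis_apply]
    rcases eq_or_ne m n with rfl | hmn
    · rw [hL.self, Finsupp.single_apply]
      by_cases hαβ : β = α
      · simp [hαβ]
      · rw [if_neg hαβ, if_neg]
        rintro ⟨⟩
        exact hαβ rfl
    · rw [hL.of_ne _ _ hmn, Finsupp.single_apply, if_neg]
      rintro ⟨⟩
      exact hmn rfl
  exact LinearMap.congr_fun h p

theorem apply_mul_levelSum (L : MPoly d →ₗ[ℝ] ℝ) (P : ∀ n, Idx d n → MPoly d) (p : MPoly d)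
    (n : ℕ) (v : Idx d n → ℝ) : L (p * levelSum P n v) = ∑ α, v α * L (p * P n α) := by
  simp [levelSum, Finset.mul_sum]

theorem levelSum_mul_levelSum (hL : IsOrthonormalFor L P) (hspan : SpansPi P) (n : ℕ)
    (v w : Idx d n → ℝ) : L (levelSum P n v * levelSum P n w) = ∑ α, v α * w α := by
  simp_rw [apply_mul_levelSum, hL.apply_mul_eq_repr hspan, hspan.repr_levelSum_self, mul_comm]

theorem levelSum_mul_levelSum_of_ne (hL : IsOrthonormalFor L P) (hspan : SpansPi P) {n m : ℕ}
    (hnm : n ≠ m) (v : Idx d n → ℝ) (w : Idx d m → ℝ) :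
    L (levelSum P n v * levelSum P m w) = 0 := by
  simp_rw [apply_mul_levelSum, hL.apply_mul_eq_repr hspan, hspan.repr_levelSum_of_ne hnm,
    mul_zero, Finset.sum_const_zero]

theorem apply_mul_levelSum_mul_levelSum (L : MPoly d →ₗ[ℝ] ℝ) (P : ∀ n, Idx d n → MPoly d)
    (f : MPoly d) {n m : ℕ} (v : Idx d n → ℝ) (w : Idx d m → ℝ) :
    L (f * (levelSum P n v * levelSum P m w)) =
      ∑ α, v α * ∑ β, L (f * P n α * P m β) * w β := by
  rw [← mul_assoc, apply_mul_levelSum]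
  simp_rw [mul_assoc f, mul_comm (levelSum P n v), ← mul_assoc f, apply_mul_levelSum,
    Finset.mul_sum]
  rw [Finset.sum_comm]
  refine Finset.sum_congr rfl fun α _ => Finset.sum_congr rfl fun β _ => ?_
  rw [mul_right_comm f]
  ring

theorem apply_X_mul_eq_zero (hL : IsOrthonormalFor L P) (hspan : SpansPi P) (i : Fin d)
    {n m : ℕ} (h : n + 1 < m ∨ m + 1 < n) (α : Idx d n) (β : Idx d m) :
    L (X i * P n α * P m β) = 0 := by
  rcases h with h | h
  · rw [hL.apply_mul_eq_repr hspan]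
    exact hspan.repr_eq_zero (X_mul_mem i (hspan.mem_degree_le le_rfl α)) h β
  · rw [mul_right_comm, hL.apply_mul_eq_repr hspan]
    exact hspan.repr_eq_zero (X_mul_mem i (hspan.mem_degree_le le_rfl β)) h α

end IsOrthonormalFor

theorem l2OpNorm_le {m n : Type*} [Fintype m] [Fintype n] [DecidableEq n] {A : Matrix m n ℝ}
    {R : ℝ} (hR : 0 ≤ R) (h : ∀ w, ∑ a, (A *ᵥ w) a ^ 2 ≤ R ^ 2 * ∑ b, w b ^ 2) :
    l2OpNorm A ≤ R := by
  refine ContinuousLinearMap.opNorm_le_bound _ hR fun w => ?_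
  refine le_of_sq_le_sq ?_ (by positivity)
  rw [mul_pow, EuclideanSpace.real_norm_sq_eq, EuclideanSpace.real_norm_sq_eq]
  exact h w

theorem abs_sum_mul_sum_le {m n : Type*} [Fintype m] [Fintype n] [DecidableEq n]
    {A : Matrix m n ℝ} {M : ℝ} (hM : l2OpNorm A ≤ M) (v : m → ℝ) (w : n → ℝ) :
    |∑ a, v a * ∑ b, A a b * w b| ≤ M / 2 * (∑ a, v a ^ 2 + ∑ b, w b ^ 2) := by
  have hM0 : 0 ≤ M := (norm_nonneg _).trans hM
  let v' : EuclideanSpace ℝ m := WithLp.toLp 2 v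
  let w' : EuclideanSpace ℝ n := WithLp.toLp 2 w
  have h1 : ‖Matrix.toEuclideanLin A w'‖ ≤ M * ‖w'‖ :=
    ((LinearMap.toContinuousLinearMap (Matrix.toEuclideanLin A)).le_opNorm w').trans
      (mul_le_mul_of_nonneg_right hM (norm_nonneg _))
  have h2 : ∑ a, v a * ∑ b, A a b * w b = inner ℝ (Matrix.toEuclideanLin A w') v' := by
    rw [PiLp.inner_apply]
    rfl
  have hv : ‖v'‖ ^ 2 = ∑ a, v a ^ 2 := EuclideanSpace.real_norm_sq_eq v'
  have hw : ‖w'‖ ^ 2 = ∑ b, w b ^ 2 := EuclideanSpace.real_norm_sq_eq w'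
  rw [h2, ← hv, ← hw]
  calc _ ≤ ‖Matrix.toEuclideanLin A w'‖ * ‖v'‖ := abs_real_inner_le_norm _ _
    _ ≤ M * ‖w'‖ * ‖v'‖ := mul_le_mul_of_nonneg_right h1 (norm_nonneg _)
    _ ≤ _ := by nlinarith [mul_nonneg hM0 (sq_nonneg (‖v'‖ - ‖w'‖))]

namespace IsOrthonormalFor

variable {L : MPoly d →ₗ[ℝ] ℝ} {P : ∀ n, Idx d n → MPoly d}

/-- The block at levels `n`, `m` of the matrix of multiplication by `X i`. -/
def jacobiBlock (L : MPoly d →ₗ[ℝ] ℝ) (P : ∀ n, Idx d n → MPoly d) (i : Fin d) (n m : ℕ) :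
    Matrix (Idx d n) (Idx d m) ℝ := Matrix.of fun α β => L (X i * P n α * P m β)

theorem jacobiBlock_transpose (i : Fin d) (n m : ℕ) :
    (jacobiBlock L P i n m)ᵀ = jacobiBlock L P i m n := by
  ext α β
  simp only [jacobiBlock, Matrix.transpose_apply, Matrix.of_apply, mul_right_comm]

theorem repr_X_mul (hL : IsOrthonormalFor L P) (hspan : SpansPi P) (i : Fin d) {n m : ℕ}
    (α : Idx d n) (β : Idx d m) :
    hspan.basis.repr (X i * P n α) ⟨m, β⟩ = jacobiBlock L P i n m α β :=
  (hL.apply_mul_eq_repr hspan _ _ _).symm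

theorem recurrence_zero (hL : IsOrthonormalFor L P) (hspan : SpansPi P) (i : Fin d)
    (α : Idx d 0) : X i * P 0 α = levelSum P 1 (jacobiBlock L P i 0 1 α) +
      levelSum P 0 (jacobiBlock L P i 0 0 α) := by
  refine hspan.basis.ext_elem fun ⟨m, β⟩ => ?_
  rw [map_add, Finsupp.add_apply, hL.repr_X_mul hspan]
  rcases eq_or_ne m 0 with rfl | h0
  · rw [hspan.repr_levelSum_self, hspan.repr_levelSum_of_ne (by omega), zero_add]
  rcases eq_or_ne m 1 with rfl | h1
  · rw [hspan.repr_levelSum_self, hspan.repr_levelSum_of_ne (by omega), add_zero]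
  rw [hspan.repr_levelSum_of_ne h1.symm, hspan.repr_levelSum_of_ne h0.symm, add_zero]
  exact hL.apply_X_mul_eq_zero hspan i (by omega) α β

theorem recurrence_succ (hL : IsOrthonormalFor L P) (hspan : SpansPi P) (n : ℕ) (i : Fin d)
    (α : Idx d (n + 1)) :
    X i * P (n + 1) α = levelSum P (n + 2) (jacobiBlock L P i (n + 1) (n + 2) α) +
      levelSum P (n + 1) (jacobiBlock L P i (n + 1) (n + 1) α) +
      levelSum P n (jacobiBlock L P i (n + 1) n α) := by
  refine hspan.basis.ext_elem fun ⟨m, β⟩ => ?_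
  rw [map_add, map_add, Finsupp.add_apply, Finsupp.add_apply, hL.repr_X_mul hspan]
  rcases eq_or_ne m n with rfl | h0
  · rw [hspan.repr_levelSum_self, hspan.repr_levelSum_of_ne (by omega),
      hspan.repr_levelSum_of_ne (by omega), zero_add, zero_add]
  rcases eq_or_ne m (n + 1) with rfl | h1
  · rw [hspan.repr_levelSum_self, hspan.repr_levelSum_of_ne (by omega),
      hspan.repr_levelSum_of_ne (by omega), add_zero, zero_add]
  rcases eq_or_ne m (n + 2) with rfl | h2
  · rw [hspan.repr_levelSum_self, hspan.repr_levelSum_of_ne (by omega),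
      hspan.repr_levelSum_of_ne (by omega), add_zero, add_zero]
  rw [hspan.repr_levelSum_of_ne h0.symm, hspan.repr_levelSum_of_ne h1.symm,
    hspan.repr_levelSum_of_ne h2.symm, add_zero, add_zero]
  exact hL.apply_X_mul_eq_zero hspan i (by omega) α β

theorem rank_jacobiBlock (hL : IsOrthonormalFor L P) (hspan : SpansPi P) (n : ℕ) (i : Fin d) :
    (jacobiBlock L P i n (n + 1)).rank = Fintype.card (Idx d n) := by
  refine LinearIndependent.rank_matrix (Fintype.linearIndependent_iff.2 fun g hg α => ?_)
  set q := levelSum P n g with hq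
  rw [← hspan.repr_levelSum_self n g α, ← hq]
  have hXq : X i * q ∈ restrictTotalDegree (Fin d) ℝ n := by
    refine hspan.mem_of_repr_eq_zero fun m hm β => ?_
    rcases eq_or_ne m (n + 1) with rfl | hm'
    · have := congrFun hg β
      rw [← hL.apply_mul_eq_repr hspan, mul_right_comm, hq, apply_mul_levelSum]
      simpa [jacobiBlock, Finset.sum_apply, mul_right_comm] using this
    · exact hspan.repr_eq_zero (X_mul_mem i (hspan.levelSum_mem le_rfl g)) (by omega) β
  by_cases hq0 : q = 0
  · simp [hq0]
  rw [mem_restrictTotalDegree, totalDegree_mul_of_isDomain (X_ne_zero i) hq0, totalDegree_X] at hXq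
  exact hspan.repr_eq_zero ((mem_restrictTotalDegree _ _ q).2 le_rfl) (by omega) α

theorem restrictTotalDegree_succ_induction {n : ℕ} {p : MPoly d → Prop}
    (hle : ∀ q ∈ restrictTotalDegree (Fin d) ℝ n, p q)
    (hX : ∀ i, ∀ q ∈ restrictTotalDegree (Fin d) ℝ n, p (X i * q))
    (hadd : ∀ q r, p q → p r → p (q + r)) (hsmul : ∀ (c : ℝ) q, p q → p (c • q))
    {q : MPoly d} (hq : q ∈ restrictTotalDegree (Fin d) ℝ (n + 1)) : p q := by
  rw [restrictTotalDegree, restrictSupport_eq_span] at hq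
  induction hq using Submodule.span_induction with
  | zero => exact hle 0 (Submodule.zero_mem _)
  | add x y _ _ hx hy => exact hadd x y hx hy
  | smul a x _ hx => exact hsmul a x hx
  | mem x hx =>
    obtain ⟨u, hu, rfl⟩ := hx
    rw [Set.mem_ofPred_eq, Finsupp.sum_fintype _ _ (fun _ => rfl)] at hu
    by_cases h0 : u = 0
    · subst h0
      exact hle _ ((mem_restrictTotalDegree _ _ _).2 (by simp))
    obtain ⟨i, hi⟩ := Finsupp.ne_iff.1 h0
    rw [Finsupp.zero_apply] at hi
    obtain ⟨w, rfl⟩ : ∃ w, u = Finsupp.single i 1 + w :=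
      ⟨u - Finsupp.single i 1, (add_tsub_cancel_of_le
        (Finsupp.single_le_iff.2 (Nat.one_le_iff_ne_zero.2 hi))).symm⟩
    have e : (monomial (Finsupp.single i 1 + w) (1 : ℝ) : MPoly d) = X i * monomial w 1 := by
      rw [X, monomial_mul, one_mul]
    simp only [e]
    refine hX i _ ((mem_restrictTotalDegree _ _ _).2 ((totalDegree_monomial_le _ _).trans ?_))
    rw [Finsupp.sum_fintype _ _ (fun _ => rfl)]
    simp only [Finsupp.add_apply, Finset.sum_add_distrib, Finsupp.single_apply, Finset.sum_ite_eq,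
      Finset.mem_univ, if_true] at hu
    simp only [id]
    omega

theorem rank_stacked_jacobiBlock (hL : IsOrthonormalFor L P) (hspan : SpansPi P) (n : ℕ) :
    (Matrix.of fun (p : Fin d × Idx d n) (β : Idx d (n + 1)) =>
      jacobiBlock L P p.1 n (n + 1) p.2 β).rank = Fintype.card (Idx d (n + 1)) := by
  rw [← Matrix.rank_transpose]
  refine LinearIndependent.rank_matrix (Fintype.linearIndependent_iff.2 fun g hg α => ?_)
  set q := levelSum P (n + 1) g with hq
  have hlow : ∀ r ∈ restrictTotalDegree (Fin d) ℝ n, L (r * q) = 0 := fun r hr => by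
    rw [hq, apply_mul_levelSum]
    refine Finset.sum_eq_zero fun β _ => ?_
    rw [hL.apply_mul_eq_repr hspan, hspan.repr_eq_zero hr (Nat.lt_succ_self n), mul_zero]
  have hX : ∀ i, ∀ r ∈ restrictTotalDegree (Fin d) ℝ n, L (X i * r * q) = 0 := fun i r hr => by
    rw [← hspan n] at hr
    induction hr using Submodule.span_induction with
    | zero => simp
    | add x y _ _ hx hy => rw [mul_add, add_mul, map_add, hx, hy, add_zero]
    | smul a x _ hx => rw [mul_smul_comm, smul_mul_assoc, map_smul, hx, smul_zero]
    | mem x hx =>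
      obtain ⟨m, hm, β, rfl⟩ := hx
      rcases hm.eq_or_lt with rfl | hm
      · have := congrFun hg (i, β)
        rw [hq, apply_mul_levelSum]
        simpa [jacobiBlock, Finset.sum_apply] using this
      · refine hlow _ ?_
        have := X_mul_mem i (hspan.mem_degree_le le_rfl β)
        rw [mem_restrictTotalDegree] at this ⊢
        omega
  have hall : L (P (n + 1) α * q) = 0 :=
    restrictTotalDegree_succ_induction (p := fun r => L (r * q) = 0) hlow hX
      (fun r s hr hs => by rw [add_mul, map_add, hr, hs, add_zero])
      (fun c r hr => by rw [smul_mul_assoc, map_smul, hr, smul_zero])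
      (hspan.mem_degree_le le_rfl α)
  rwa [mul_comm, hL.apply_mul_eq_repr hspan, hspan.repr_levelSum_self] at hall

theorem l2OpNorm_jacobiBlock_le (hL : IsOrthonormalFor L P) (hspan : SpansPi P)
    (hpos : ∀ p, 0 ≤ L (p * p)) {R : ℝ} (hR : 0 ≤ R) {i : Fin d}
    (hb : ∀ p, L ((X i * p) * (X i * p)) ≤ R ^ 2 * L (p * p)) (n m : ℕ) :
    l2OpNorm (jacobiBlock L P i n m) ≤ R := by
  refine l2OpNorm_le hR fun w => ?_
  set u := jacobiBlock L P i n m *ᵥ w with hu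
  have h1 : L (X i * (levelSum P n u * levelSum P m w)) = ∑ α, u α ^ 2 := by
    rw [apply_mul_levelSum_mul_levelSum]
    exact Finset.sum_congr rfl fun α _ => (sq (u α)).symm
  have h2 := hpos (levelSum P n u - X i * levelSum P m w)
  have e : (levelSum P n u - X i * levelSum P m w) * (levelSum P n u - X i * levelSum P m w) =
      levelSum P n u * levelSum P n u -
        (2 : ℝ) • (X i * (levelSum P n u * levelSum P m w)) +
      (X i * levelSum P m w) * (X i * levelSum P m w) := by
    rw [smul_eq_C_mul, map_ofNat]
    ring
  have h3 := hb (levelSum P m w)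
  rw [hL.levelSum_mul_levelSum hspan] at h3
  rw [e, map_add, map_sub, map_smul, h1, hL.levelSum_mul_levelSum hspan, smul_eq_mul] at h2
  simp only [← sq] at h2 h3
  linarith

end IsOrthonormalFor

theorem integrable_eval {μ : Measure (Fin d → ℝ)} (hμ : HasAllMoments μ) (p : MPoly d) :
    Integrable (fun x => eval x p) μ := by
  induction p using MvPolynomial.induction_on' with
  | monomial u a =>
    have := (hμ u).const_mul a
    refine this.congr (Filter.Eventually.of_forall fun x => ?_)
    simp only [eval_monomial]
    rw [Finsupp.prod_fintype _ _ (by simp)]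
  | add p q hp hq =>
    simp only [map_add]
    exact hp.add hq

/-- Integration of polynomials against a measure with finite moments. -/
def integralFunctional {μ : Measure (Fin d → ℝ)} (hμ : HasAllMoments μ) : MPoly d →ₗ[ℝ] ℝ where
  toFun p := ∫ x, eval x p ∂μ
  map_add' p q := by
    simp only [map_add]
    exact integral_add (integrable_eval hμ p) (integrable_eval hμ q)
  map_smul' c p := by
    simp only [smul_eval, RingHom.id_apply, smul_eq_mul]
    exact integral_const_mul c _

theorem exists_abs_le_of_isCompact {K : Set (Fin d → ℝ)} (hK : IsCompact K) :
    ∃ R : ℝ, 0 < R ∧ ∀ x ∈ K, ∀ i, |x i| ≤ R := by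
  obtain ⟨R, hR, h⟩ := hK.isBounded.exists_pos_norm_le
  exact ⟨R, hR, fun x hx i => (norm_le_pi_norm x i).trans (h x hx)⟩

theorem integralFunctional_X_sq_le {μ : Measure (Fin d → ℝ)} (hμ : HasAllMoments μ)
    {K : Set (Fin d → ℝ)} (hK : μ Kᶜ = 0) {R : ℝ} (hR : ∀ x ∈ K, ∀ i, |x i| ≤ R) (i : Fin d)
    (p : MPoly d) : integralFunctional hμ ((X i * p) * (X i * p)) ≤
      R ^ 2 * integralFunctional hμ (p * p) := by
  rw [← smul_eq_mul (R ^ 2), ← map_smul]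
  refine integral_mono_ae (integrable_eval hμ _) (integrable_eval hμ _) ?_
  have hae : ∀ᵐ x ∂μ, x ∈ K := by rwa [ae_iff]
  filter_upwards [hae] with x hx
  simp only [map_mul, eval_X, smul_eval]
  have h : x i ^ 2 ≤ R ^ 2 := by
    rw [← sq_abs (x i)]
    exact pow_le_pow_left₀ (abs_nonneg _) (hR x hx i) 2
  nlinarith [mul_le_mul_of_nonneg_right h (mul_self_nonneg (eval x p))]

/-- The three-term recurrence with coefficient matrices `A`, `B`. -/
structure IsThreeTerm (P : ∀ n, Idx d n → MPoly d)
    (A : ∀ n : ℕ, Fin d → Matrix (Idx d n) (Idx d (n + 1)) ℝ)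
    (B : ∀ n : ℕ, Fin d → Matrix (Idx d n) (Idx d n) ℝ) : Prop where
  symm : ∀ n i, (B n i).IsSymm
  zero : ∀ (i : Fin d) (α : Idx d 0),
    X i * P 0 α = levelSum P 1 (A 0 i α) + levelSum P 0 (B 0 i α)
  succ : ∀ (n : ℕ) (i : Fin d) (α : Idx d (n + 1)), X i * P (n + 1) α =
    levelSum P (n + 2) (A (n + 1) i α) + levelSum P (n + 1) (B (n + 1) i α) +
      levelSum P n ((A n i)ᵀ α)

namespace IsThreeTerm

variable {P : ∀ n, Idx d n → MPoly d} {A : ∀ n : ℕ, Fin d → Matrix (Idx d n) (Idx d (n + 1)) ℝ}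
  {B : ∀ n : ℕ, Fin d → Matrix (Idx d n) (Idx d n) ℝ}

theorem repr_up (h : IsThreeTerm P A B) (hspan : SpansPi P) (n : ℕ) (i : Fin d) (α : Idx d n)
    (β : Idx d (n + 1)) : hspan.basis.repr (X i * P n α) ⟨n + 1, β⟩ = A n i α β := by
  cases n with
  | zero => rw [h.zero, map_add, Finsupp.add_apply, hspan.repr_levelSum_self,
      hspan.repr_levelSum_of_ne (by omega), add_zero]
  | succ n => rw [h.succ, map_add, map_add, Finsupp.add_apply, Finsupp.add_apply,
      hspan.repr_levelSum_self, hspan.repr_levelSum_of_ne (by omega),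
      hspan.repr_levelSum_of_ne (by omega), add_zero, add_zero]

theorem repr_diag (h : IsThreeTerm P A B) (hspan : SpansPi P) (n : ℕ) (i : Fin d) (α : Idx d n)
    (β : Idx d n) : hspan.basis.repr (X i * P n α) ⟨n, β⟩ = B n i α β := by
  cases n with
  | zero => rw [h.zero, map_add, Finsupp.add_apply, hspan.repr_levelSum_self,
      hspan.repr_levelSum_of_ne (by omega), zero_add]
  | succ n => rw [h.succ, map_add, map_add, Finsupp.add_apply, Finsupp.add_apply,
      hspan.repr_levelSum_self, hspan.repr_levelSum_of_ne (by omega),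
      hspan.repr_levelSum_of_ne (by omega), add_zero, zero_add]

theorem repr_down (h : IsThreeTerm P A B) (hspan : SpansPi P) (n : ℕ) (i : Fin d)
    (α : Idx d (n + 1)) (β : Idx d n) :
    hspan.basis.repr (X i * P (n + 1) α) ⟨n, β⟩ = A n i β α := by
  rw [h.succ, map_add, map_add, Finsupp.add_apply, Finsupp.add_apply,
    hspan.repr_levelSum_self, hspan.repr_levelSum_of_ne (by omega),
    hspan.repr_levelSum_of_ne (by omega), zero_add, zero_add, Matrix.transpose_apply]

theorem repr_far (h : IsThreeTerm P A B) (hspan : SpansPi P) {n m : ℕ} (i : Fin d)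
    (hnm : n + 1 < m ∨ m + 1 < n) (α : Idx d n) (β : Idx d m) :
    hspan.basis.repr (X i * P n α) ⟨m, β⟩ = 0 := by
  cases n with
  | zero => rw [h.zero, map_add, Finsupp.add_apply, hspan.repr_levelSum_of_ne (by omega),
      hspan.repr_levelSum_of_ne (by omega), add_zero]
  | succ n => rw [h.succ, map_add, map_add, Finsupp.add_apply, Finsupp.add_apply,
      hspan.repr_levelSum_of_ne (by omega), hspan.repr_levelSum_of_ne (by omega),
      hspan.repr_levelSum_of_ne (by omega), add_zero, add_zero]

theorem repr_symm (h : IsThreeTerm P A B) (hspan : SpansPi P) {n m : ℕ} (i : Fin d)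
    (α : Idx d n) (β : Idx d m) :
    hspan.basis.repr (X i * P n α) ⟨m, β⟩ = hspan.basis.repr (X i * P m β) ⟨n, α⟩ := by
  by_cases hfar : n + 1 < m ∨ m + 1 < n
  · rw [h.repr_far hspan i hfar, h.repr_far hspan i hfar.symm]
  rcases lt_trichotomy n m with hlt | rfl | hlt
  · obtain rfl : m = n + 1 := by omega
    rw [h.repr_up, h.repr_down]
  · rw [h.repr_diag, h.repr_diag, (h.symm n i).apply]
  · obtain rfl : n = m + 1 := by omega
    rw [h.repr_up, h.repr_down]

end IsThreeTerm

/-- The bilinear form for which the family `P` is orthonormal. -/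
def SpansPi.form {P : ∀ n, Idx d n → MPoly d} (hspan : SpansPi P) :
    MPoly d →ₗ[ℝ] MPoly d →ₗ[ℝ] ℝ :=
  hspan.basis.constr ℝ fun s => hspan.basis.coord s

theorem SpansPi.form_basis {P : ∀ n, Idx d n → MPoly d} (hspan : SpansPi P)
    (s : Σ m, Idx d m) (p : MPoly d) :
    hspan.form (hspan.basis s) p = hspan.basis.repr p s := by
  rw [SpansPi.form, Module.Basis.constr_basis, Module.Basis.coord_apply]

theorem SpansPi.form_comm {P : ∀ n, Idx d n → MPoly d} (hspan : SpansPi P) (p q : MPoly d) :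
    hspan.form p q = hspan.form q p := by
  have h : hspan.form = hspan.form.flip := by
    refine hspan.basis.ext fun s => hspan.basis.ext fun t => ?_
    rw [LinearMap.flip_apply, hspan.form_basis, hspan.form_basis, Module.Basis.repr_self,
      Module.Basis.repr_self, Finsupp.single_apply, Finsupp.single_apply]
    simp only [eq_comm]
  exact LinearMap.congr_fun₂ h p q

theorem IsThreeTerm.form_X_mul {P : ∀ n, Idx d n → MPoly d}
    {A : ∀ n : ℕ, Fin d → Matrix (Idx d n) (Idx d (n + 1)) ℝ}
    {B : ∀ n : ℕ, Fin d → Matrix (Idx d n) (Idx d n) ℝ} (h : IsThreeTerm P A B)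
    (hspan : SpansPi P) (i : Fin d) (p q : MPoly d) :
    hspan.form (X i * p) q = hspan.form p (X i * q) := by
  have e : hspan.form ∘ₗ LinearMap.mulLeft ℝ (X i) =
      (hspan.form.flip ∘ₗ LinearMap.mulLeft ℝ (X i)).flip := by
    refine hspan.basis.ext fun ⟨n, α⟩ => hspan.basis.ext fun ⟨m, β⟩ => ?_
    simp only [LinearMap.flip_apply, LinearMap.comp_apply, LinearMap.mulLeft_apply]
    rw [hspan.form_comm, hspan.form_basis, hspan.form_basis, hspan.basis_apply,
      hspan.basis_apply, h.repr_symm hspan]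
  exact LinearMap.congr_fun₂ e p q

theorem IsThreeTerm.form_mul {P : ∀ n, Idx d n → MPoly d}
    {A : ∀ n : ℕ, Fin d → Matrix (Idx d n) (Idx d (n + 1)) ℝ}
    {B : ∀ n : ℕ, Fin d → Matrix (Idx d n) (Idx d n) ℝ} (h : IsThreeTerm P A B)
    (hspan : SpansPi P) (f p q : MPoly d) :
    hspan.form (f * p) q = hspan.form p (f * q) := by
  induction f using MvPolynomial.induction_on generalizing p q with
  | C a => simp only [← smul_eq_C_mul, map_smul, LinearMap.smul_apply]
  | add f g hf hg => simp only [add_mul, map_add, LinearMap.add_apply, hf, hg]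
  | mul_X f i hf => rw [mul_assoc, hf, h.form_X_mul hspan, mul_comm f (X i), mul_assoc]

theorem IsThreeTerm.exists_functional {P : ∀ n, Idx d n → MPoly d}
    {A : ∀ n : ℕ, Fin d → Matrix (Idx d n) (Idx d (n + 1)) ℝ}
    {B : ∀ n : ℕ, Fin d → Matrix (Idx d n) (Idx d n) ℝ} (h : IsThreeTerm P A B)
    (hspan : SpansPi P) : ∃ L : MPoly d →ₗ[ℝ] ℝ, IsOrthonormalFor L P := by
  have hmul : ∀ p q, hspan.form 1 (p * q) = hspan.form p q := fun p q => by
    rw [← h.form_mul hspan, mul_one]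
  refine ⟨hspan.form 1, fun n α β => ?_, fun n m hnm α β => ?_⟩ <;>
  rw [hmul, ← hspan.basis_apply, ← hspan.basis_apply, hspan.form_basis, Module.Basis.repr_self,
    Finsupp.single_apply]
  · refine if_congr ?_ rfl rfl
    constructor
    · rintro ⟨⟩; rfl
    · rintro rfl; rfl
  · rw [if_neg]
    rintro ⟨⟩
    exact hnm rfl

namespace IsOrthonormalFor

variable {L : MPoly d →ₗ[ℝ] ℝ} {P : ∀ n, Idx d n → MPoly d}

theorem sum_mul_sum (hL : IsOrthonormalFor L P) (hspan : SpansPi P)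
    (v : ∀ n, Idx d n → ℝ) (N : ℕ) :
    L ((∑ n ∈ Finset.range N, levelSum P n (v n)) * ∑ n ∈ Finset.range N, levelSum P n (v n)) =
      ∑ n ∈ Finset.range N, ∑ α, v n α ^ 2 := by
  rw [Finset.sum_mul_sum, map_sum]
  refine Finset.sum_congr rfl fun n hn => ?_
  rw [map_sum, Finset.sum_eq_single_of_mem n hn fun m _ hm =>
    hL.levelSum_mul_levelSum_of_ne hspan hm.symm _ _, hL.levelSum_mul_levelSum hspan]
  simp only [sq]

theorem nonneg (hL : IsOrthonormalFor L P) (hspan : SpansPi P) (p : MPoly d) :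
    0 ≤ L (p * p) := by
  rw [hspan.eq_sum_levelSum p,
    hL.sum_mul_sum hspan (fun n α => hspan.basis.repr p ⟨n, α⟩)]
  positivity

theorem abs_apply_X_mul_sum_le (hL : IsOrthonormalFor L P) (hspan : SpansPi P) {i : Fin d}
    {M₁ M₂ : ℝ} (h1 : ∀ n, l2OpNorm (jacobiBlock L P i n (n + 1)) ≤ M₁)
    (h2 : ∀ n, l2OpNorm (jacobiBlock L P i n n) ≤ M₂) (v : ∀ n, Idx d n → ℝ) (N : ℕ) :
    |L (X i * ((∑ n ∈ Finset.range (N + 1), levelSum P n (v n)) *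
      ∑ n ∈ Finset.range (N + 1), levelSum P n (v n)))| ≤
      (M₂ + 2 * M₁) * (∑ n ∈ Finset.range (N + 1), ∑ α, v n α ^ 2) - M₁ * ∑ α, v N α ^ 2 := by
  have hM₁ : 0 ≤ M₁ := (norm_nonneg _).trans (h1 0)
  have hdiag : ∀ n, |L (X i * (levelSum P n (v n) * levelSum P n (v n)))| ≤
      M₂ * ∑ α, v n α ^ 2 := fun n => by
    rw [apply_mul_levelSum_mul_levelSum]
    refine (abs_sum_mul_sum_le (h2 n) (v n) (v n)).trans (le_of_eq (by ring))
  have hup : ∀ n, |L (X i * (levelSum P n (v n) * levelSum P (n + 1) (v (n + 1))))| ≤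
      M₁ / 2 * (∑ α, v n α ^ 2 + ∑ α, v (n + 1) α ^ 2) := fun n => by
    rw [apply_mul_levelSum_mul_levelSum]
    exact abs_sum_mul_sum_le (h1 n) (v n) (v (n + 1))
  induction N with
  | zero =>
    simp only [zero_add, Finset.sum_range_one]
    have h0 : 0 ≤ ∑ α, v 0 α ^ 2 := by positivity
    nlinarith [hdiag 0]
  | succ N ih =>
    have hcross : L (X i * ((∑ n ∈ Finset.range (N + 1), levelSum P n (v n)) *
        levelSum P (N + 1) (v (N + 1)))) =
        L (X i * (levelSum P N (v N) * levelSum P (N + 1) (v (N + 1)))) := by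
      rw [Finset.sum_mul, Finset.mul_sum, map_sum]
      refine Finset.sum_eq_single_of_mem N (by simp) fun n hn hnN => ?_
      rw [apply_mul_levelSum_mul_levelSum]
      refine Finset.sum_eq_zero fun α _ => ?_
      rw [Finset.sum_eq_zero, mul_zero]
      intro β _
      rw [hL.apply_X_mul_eq_zero hspan i (by grind), zero_mul]
    rw [Finset.sum_range_succ (fun n => levelSum P n (v n)) (N + 1),
      Finset.sum_range_succ (fun n => ∑ α, v n α ^ 2) (N + 1)]
    set q := ∑ n ∈ Finset.range (N + 1), levelSum P n (v n)
    set w := levelSum P (N + 1) (v (N + 1))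
    have e : X i * ((q + w) * (q + w)) =
        X i * (q * q) + (2 : ℝ) • (X i * (q * w)) + X i * (w * w) := by
      rw [smul_eq_C_mul, map_ofNat]
      ring
    rw [e, map_add, map_add, map_smul, hcross, smul_eq_mul]
    have h3 := abs_le.1 ih
    have h4 := abs_le.1 (hup N)
    have h5 := abs_le.1 (hdiag (N + 1))
    rw [abs_le]
    constructor <;> linarith [h3.1, h3.2, h4.1, h4.2, h5.1, h5.2]

theorem abs_apply_X_mul_le (hL : IsOrthonormalFor L P) (hspan : SpansPi P) {i : Fin d}
    {M₁ M₂ : ℝ} (h1 : ∀ n, l2OpNorm (jacobiBlock L P i n (n + 1)) ≤ M₁)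
    (h2 : ∀ n, l2OpNorm (jacobiBlock L P i n n) ≤ M₂) (p : MPoly d) :
    |L (X i * (p * p))| ≤ (M₂ + 2 * M₁) * L (p * p) := by
  have hM₁ : 0 ≤ M₁ := (norm_nonneg _).trans (h1 0)
  have h := hL.abs_apply_X_mul_sum_le hspan h1 h2 (fun n α => hspan.basis.repr p ⟨n, α⟩)
    p.totalDegree
  rw [← hL.sum_mul_sum hspan, ← hspan.eq_sum_levelSum p] at h
  have h0 : 0 ≤ ∑ α, hspan.basis.repr p ⟨p.totalDegree, α⟩ ^ 2 := by positivity
  nlinarith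

end IsOrthonormalFor

theorem IsThreeTerm.jacobiBlock_eq {P : ∀ n, Idx d n → MPoly d}
    {A : ∀ n : ℕ, Fin d → Matrix (Idx d n) (Idx d (n + 1)) ℝ}
    {B : ∀ n : ℕ, Fin d → Matrix (Idx d n) (Idx d n) ℝ} (h : IsThreeTerm P A B)
    (hspan : SpansPi P) {L : MPoly d →ₗ[ℝ] ℝ} (hL : IsOrthonormalFor L P) (n : ℕ) (i : Fin d) :
    IsOrthonormalFor.jacobiBlock L P i n (n + 1) = A n i ∧
      IsOrthonormalFor.jacobiBlock L P i n n = B n i := by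
  constructor <;> ext α β <;> rw [← hL.repr_X_mul hspan]
  · exact h.repr_up hspan n i α β
  · exact h.repr_diag hspan n i α β

/-- Favard-type theorem with a determinate, compactly supported representing measure:
a degree-wise spanning sequence `{ℙ_n}` with `ℙ_0 = 1` is orthonormal with respect to some
determinate compactly supported `μ ∈ M(ℝ^d)` if and only if it satisfies the three-term
relation with symmetric `B_{n,i}`, the rank conditions, and the uniform spectral-norm bounds
`sup_k ‖A_{k,i}‖₂ < ∞`, `sup_k ‖B_{k,i}‖₂ < ∞`. -/
theorem favard_theorem_with_measure
    (P : ∀ n, Idx d n → MPoly d)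
    (hP0 : ∀ α : Idx d 0, P 0 α = 1)
    (hspan : SpansPi P) :
    (∃ μ : Measure (Fin d → ℝ),
      HasAllMoments μ ∧
      (∃ K : Set (Fin d → ℝ), IsCompact K ∧ μ Kᶜ = 0) ∧
      (∀ ν : Measure (Fin d → ℝ), HasAllMoments ν →
        (∀ α : Fin d → ℕ, ∫ x, ∏ i, x i ^ α i ∂ν = ∫ x, ∏ i, x i ^ α i ∂μ) → ν = μ) ∧
      (∀ n (α β : Idx d n),
        ∫ x, eval x (P n α) * eval x (P n β) ∂μ = if α = β then 1 else 0) ∧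
      (∀ n m : ℕ, n ≠ m → ∀ (α : Idx d n) (β : Idx d m),
        ∫ x, eval x (P n α) * eval x (P m β) ∂μ = 0)) ↔
    (∃ (A : ∀ n : ℕ, Fin d → Matrix (Idx d n) (Idx d (n+1)) ℝ)
       (B : ∀ n : ℕ, Fin d → Matrix (Idx d n) (Idx d n) ℝ),
      (∀ (n : ℕ) (i : Fin d), (B n i).IsSymm) ∧
      (∀ (i : Fin d) (α : Idx d 0), X i * P 0 α =
        (∑ β : Idx d 1, A 0 i α β • P 1 β) + ∑ β : Idx d 0, B 0 i α β • P 0 β) ∧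
      (∀ (n : ℕ) (i : Fin d) (α : Idx d (n+1)), X i * P (n+1) α =
        (∑ β : Idx d (n+2), A (n+1) i α β • P (n+2) β) +
        (∑ β : Idx d (n+1), B (n+1) i α β • P (n+1) β) +
        ∑ β : Idx d n, (A n i)ᵀ α β • P n β) ∧
      (∀ (n : ℕ) (i : Fin d), (A n i).rank = Fintype.card (Idx d n)) ∧
      (∀ n : ℕ,
        (Matrix.of fun (p : Fin d × Idx d n) (β : Idx d (n+1)) => A n p.1 p.2 β).rank =
          Fintype.card (Idx d (n+1))) ∧
      (∀ i : Fin d, ∃ M₁ : ℝ, ∀ k : ℕ, l2OpNorm (A k i) ≤ M₁) ∧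
      (∀ i : Fin d, ∃ M₂ : ℝ, ∀ k : ℕ, l2OpNorm (B k i) ≤ M₂)) := by
  constructor
  · rintro ⟨μ, hμ, ⟨K, hK, hμK⟩, -, hself, hne⟩
    have hL : IsOrthonormalFor (integralFunctional hμ) P := by
      refine ⟨fun n α β => ?_, fun n m hnm α β => ?_⟩
      · rw [← hself n α β]
        exact integral_congr_ae (Filter.Eventually.of_forall fun x => map_mul _ _ _)
      · rw [← hne n m hnm α β]
        exact integral_congr_ae (Filter.Eventually.of_forall fun x => map_mul _ _ _)
    obtain ⟨R, hR, hKR⟩ := exists_abs_le_of_isCompact hK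
    have hb := integralFunctional_X_sq_le hμ hμK hKR
    have hpos := hL.nonneg hspan
    refine ⟨fun n i => IsOrthonormalFor.jacobiBlock (integralFunctional hμ) P i n (n + 1),
      fun n i => IsOrthonormalFor.jacobiBlock (integralFunctional hμ) P i n n,
      fun n i => IsOrthonormalFor.jacobiBlock_transpose i n n, hL.recurrence_zero hspan,
      fun n i α => ?_, hL.rank_jacobiBlock hspan, hL.rank_stacked_jacobiBlock hspan,
      fun i => ⟨R, fun k => hL.l2OpNorm_jacobiBlock_le hspan hpos hR.le (hb i) _ _⟩,
      fun i => ⟨R, fun k => hL.l2OpNorm_jacobiBlock_le hspan hpos hR.le (hb i) _ _⟩⟩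
    rw [IsOrthonormalFor.jacobiBlock_transpose]
    exact hL.recurrence_succ hspan n i α
  · rintro ⟨A, B, hB, hzero, hsucc, -, -, hA', hB'⟩
    have h : IsThreeTerm P A B := ⟨hB, hzero, hsucc⟩
    obtain ⟨L, hL⟩ := h.exists_functional hspan
    choose M₁ hM₁ using hA'
    choose M₂ hM₂ using hB'
    have hpos := hL.nonneg hspan
    obtain ⟨R, hR⟩ := Finite.exists_le fun i => M₂ i + 2 * M₁ i
    have hb : ∀ i p, |L (X i * (p * p))| ≤ max R 1 * L (p * p) := fun i p =>
      (hL.abs_apply_X_mul_le hspan (fun n => (h.jacobiBlock_eq hspan hL n i).1 ▸ hM₁ i n)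
        (fun n => (h.jacobiBlock_eq hspan hL n i).2 ▸ hM₂ i n) p).trans
        (mul_le_mul_of_nonneg_right ((hR i).trans (le_max_left _ _)) (hpos p))
    have hRpos : 0 < max R 1 := lt_max_of_lt_right one_pos
    have h1 : L 1 = 1 := by
      have := hL.self 0 ⟨0, by simp⟩ ⟨0, by simp⟩
      simpa [hP0] using this
    obtain ⟨μ, hfin, hcube, hintg⟩ := exists_measure_of_bounded h1 hpos hRpos hb
    have hcpt : IsCompact (Set.univ.pi fun _ : Fin d => Set.Icc (-max R 1) (max R 1)) :=
      isCompact_univ_pi fun _ => isCompact_Icc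
    have hμ : HasAllMoments μ := fun α => by
      have hr : μ = μ.restrict (Set.univ.pi fun _ => Set.Icc (-max R 1) (max R 1)) :=
        (Measure.restrict_eq_self_of_ae_mem (by rwa [ae_iff])).symm
      rw [hr]
      refine ContinuousOn.integrableOn_compact hcpt (Continuous.continuousOn ?_)
      fun_prop
    refine ⟨μ, hμ, ⟨_, hcpt, hcube⟩, fun ν hν hmom => ?_, fun n α β => ?_,
      fun n m hnm α β => ?_⟩
    · have := isFiniteMeasure_of_moments hν
      refine ext_of_moments_of_cube hcube (measure_cube_compl_eq_zero hRpos hcube hν hmom)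
        fun p => ?_
      have e : integralFunctional hν = integralFunctional hμ := by
        refine MvPolynomial.linearMap_ext fun u => LinearMap.ext_ring ?_
        have he : ∀ x : Fin d → ℝ, eval x (monomial u (1 : ℝ)) = ∏ i, x i ^ u i := fun x => by
          rw [eval_monomial, one_mul, Finsupp.prod_fintype _ _ (by simp)]
        simpa only [integralFunctional, LinearMap.comp_apply, LinearMap.coe_mk, AddHom.coe_mk, he]
          using hmom u
      exact LinearMap.congr_fun e p
    · simp only [← map_mul]
      rw [hintg, hL.self]
    · simp only [← map_mul]
      rw [hintg, hL.of_ne n m hnm]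
end
end
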